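/- Let $F$ be a non-archimedean local field of characteristic zero, let $\epsilon=\pm1$, and let $(D,\iota)$ be one of: $D=F$ with $\iota=\mathrm{id}$; a quadratic field extension $D/F$ with $\iota$ the nontrivial Galois automorphism; the central division quaternion algebra $D$ over $F$ with $\iota$ its main involution. Let $E$ be the center of $D$, $|\cdot|_E$ its normalized absolute value, and $\delta_D=\sqrt{\dim_E D}\in\{1,2\}$. Fix a nontrivial continuous unitary character $\psi:F\to\mathbb C^\times$. Let $U$ be a finite-dimensional right $D$-vector space with a non-degenerate $F$-bilinear form $\langle\,,\rangle_U:U\times U\to D$ such that $\langle u,u'a\rangle_U=\langle u,u'\rangle_U a$ and $\langle u,u'\rangle_U=\epsilon\langle u',u\rangle_U^\iota$; assume that $U$ is split, i.e. $\dim U=2r$, where $r$ is the maximal dimension of a totally isotropic $D$-subspace of $U$. Let $G(U)$ be the isometry group of $U$. Let $\bar G(U)\to G(U)$ be the metaplectic double cover if $(D,\epsilon)=(F,-1)$ (the topological central extension of $\mathrm{Sp}(U)$ by $\{\pm1\}$ that is non-split unless $U=0$), and the identity map of $G(U)$ otherwise. Let $V$ be a finite-dimensional left $D$-vector space with a non-degenerate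 $F$-bilinear form $\langle\,,\rangle_V:V\times V\to D$ such that $\langle av,v'\rangle_V=a\langle v,v'\rangle_V$ and $\langle v,v'\rangle_V=-\epsilon\langle v',v\rangle_V^\iota$. The space $W=U\otimes_D V$ is a symplectic $F$-space under $\langle u\otimes v,u'\otimes v'\rangle=\tfrac12\big(\langle u,u'\rangle_U\langle v,v'\rangle_V^\iota+\langle v,v'\rangle_V\langle u,u'\rangle_U^\iota\big)$, and $H(W)=W\times F$ denotes the Heisenberg group with product $(w,t)(w',t')=(w+w',\,t+t'+\langle w,w'\rangle)$. The group $\bar G(U)$ acts on $H(W)$ through $G(U)$ by $g\cdot(u\otimes v,t)=(gu\otimes v,t)$. Let $\omega$ be a smooth complex representation of $\bar G(U)\ltimes H(W)$ whose restriction to $H(W)$ is irreducible, such that $(0,t)$ acts by $\psi(t)$ for every $t\in F$, and such that, if $(D,\epsilon)=(F,-1)$, the nontrivial element of the kernel of $\bar G(U)\to G(U)$ acts by $(-1)^{\dim V}$. For a Lagrangian subspace $X$ of $U$ (a totally isotropic $D$-subspace with $\dim U=2\dim X$) let $\bar P(X)\subset\bar G(U)$ be the preimage of the stabilizer of $X$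 in $G(U)$, and for $h\in\bar P(X)$ put $|h|_X=|\det(h|_X)|_E^{\delta_D}$, where $\det$ is the reduced norm of $\mathrm{End}_D(X)$. Let $\kappa_X:\bar P(X)\to\mathbb C^\times$ be the unique homomorphism for which there is a nonzero linear functional $\lambda$ on $\omega$, invariant under $X\otimes_D V\subset H(W)$, with $$\lambda(h\cdot\phi)=\kappa_X(h)\,|h|_X^{(\dim V)/2}\,\lambda(\phi)\qquad(h\in\bar P(X),\ \phi\in\omega).$$ Then, for any two Lagrangian subspaces $X$ and $Y$ of $U$, the characters $\kappa_X$ and $\kappa_Y$ are well defined (they exist and are unique), and $\kappa_X(h)=\kappa_Y(h)$ for all $h\in\bar P(X)\cap\bar P(Y)$. -/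

import Mathlib

noncomputable section

open scoped TensorProduct NNReal

namespace Kudla


/-! ### The division algebra `D` with its involution -/

/-- `D` (a division ring which is an `F`-algebra, with involutive anti-automorphism `ι = star`)
is one of the following:
* `D = F` and `ι` is the identity;
* `D` is a quadratic field extension of `F` and `ι` is the nontrivial element of the Galois group;
* `D` is a central division quaternion algebra over `F` and `ι` is the main involution, that is,
  the involution for which all the norms `x * ι x` lie in `F`. -/
class IsTypeI (F D : Type*) [Field F] [DivisionRing D] [Algebra F D] [StarRing D] : Prop where
  star_algebraMap : ∀ c : F, star (algebraMap F D c) = algebraMap F D c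
  cases :
    (Module.finrank F D = 1 ∧ ∀ x : D, star x = x) ∨
    (Module.finrank F D = 2 ∧ (∀ x y : D, x * y = y * x) ∧ ∃ x : D, star x ≠ x) ∨
    (Module.finrank F D = 4 ∧ Algebra.IsCentral F D ∧
      ∀ x : D, x * star x ∈ Set.range (algebraMap F D))

section Algebra

variable {F D : Type*} [Field F] [DivisionRing D] [Algebra F D] [StarRing D] [IsTypeI F D]

variable (F D) in
/-- The involution `ι` as an `F`-linear map. -/
def starLin : D →ₗ[F] D where
  toFun := star
  map_add' := star_add
  map_smul' c x := by
    rw [Algebra.smul_def, star_mul, IsTypeI.star_algebraMap, ← Algebra.commutes,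
      ← Algebra.smul_def, RingHom.id_apply]

variable (F) in
theorem add_star_mem (x : D) : ∃ c : F, algebraMap F D c = x + star x := by
  rcases IsTypeI.cases (F := F) (D := D) with ⟨h, -⟩ | ⟨h, -, y, hy⟩ | ⟨-, -, h⟩
  · obtain ⟨c, hc⟩ := (finrank_eq_one_iff_of_nonzero' (1 : D) one_ne_zero).1 h (x + star x)
    exact ⟨c, by rw [Algebra.algebraMap_eq_smul_one, hc]⟩
  · by_contra hne
    set z := x + star x with hz
    have hzs : star z = z := by rw [hz, star_add, star_star, add_comm]
    have hli : LinearIndependent F ![(1 : D), z] := by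
      rw [LinearIndependent.pair_iff' one_ne_zero]
      intro c hc
      exact hne ⟨c, by rw [Algebra.algebraMap_eq_smul_one, hc]⟩
    have : FiniteDimensional F D := Module.finite_of_finrank_pos (by omega)
    have hsp := hli.span_eq_top_of_card_eq_finrank' (by simp [h])
    have hyt : y ∈ Submodule.span F (Set.range ![(1 : D), z]) := hsp ▸ Submodule.mem_top
    rw [Matrix.range_cons, Matrix.range_cons, Matrix.range_empty, Set.union_empty,
      Set.singleton_union, Submodule.mem_span_pair] at hyt
    obtain ⟨a, b, rfl⟩ := hyt
    apply hy
    change starLin F D _ = _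
    rw [map_add, map_smul, map_smul]
    change a • star (1 : D) + b • star z = _
    rw [star_one, hzs]
  · obtain ⟨a, ha⟩ := h x
    obtain ⟨b, hb⟩ := h (x + 1)
    refine ⟨b - a - 1, ?_⟩
    rw [map_sub, map_sub, ha, hb, map_one, star_add, star_one]
    noncomm_ring

variable (F D) in
/-- The `F`-linear map `D → F`, `x ↦ (x + ι x) / 2`. -/
def halfTrace : D →ₗ[F] F where
  toFun x := 2⁻¹ * (add_star_mem F x).choose
  map_add' x y := by
    rw [← mul_add]
    congr 1
    apply (algebraMap F D).injective
    rw [map_add, (add_star_mem F (x + y)).choose_spec, (add_star_mem F x).choose_spec,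
      (add_star_mem F y).choose_spec, star_add]
    abel
  map_smul' c x := by
    rw [RingHom.id_apply, smul_eq_mul, mul_left_comm]
    congr 1
    apply (algebraMap F D).injective
    rw [map_mul, (add_star_mem F (c • x)).choose_spec, (add_star_mem F x).choose_spec, mul_add,
      ← Algebra.smul_def, ← Algebra.smul_def]
    exact congrArg _ ((starLin F D).map_smul c x)

theorem algebraMap_halfTrace (x : D) :
    algebraMap F D (halfTrace F D x) = algebraMap F D 2⁻¹ * (x + star x) := by
  change algebraMap F D (2⁻¹ * (add_star_mem F x).choose) = _
  rw [map_mul, (add_star_mem F x).choose_spec]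

theorem halfTrace_mul_comm [CharZero F] (x y : D) :
    halfTrace F D (x * y) = halfTrace F D (y * x) := by
  apply (algebraMap F D).injective
  rw [algebraMap_halfTrace, algebraMap_halfTrace]
  congr 1
  rcases eq_or_ne y 0 with rfl | hy
  · simp
  obtain ⟨c, hc⟩ := add_star_mem F (y * x)
  obtain ⟨d, hd⟩ := add_star_mem F y
  obtain ⟨n, hn⟩ := add_star_mem F (y * star y)
  have h1 : star y * y = y * star y := by
    have : star y = algebraMap F D d - y := by rw [hd]; abel
    rw [this, sub_mul, mul_sub, Algebra.commutes]
  have h2 : y * star y = algebraMap F D (2⁻¹ * n) := by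
    have h2' : (2 : D) = algebraMap F D 2 := (map_ofNat (algebraMap F D) 2).symm
    have h20 : (algebraMap F D 2) ≠ 0 :=
      (map_ne_zero (algebraMap F D)).2 two_ne_zero
    rw [map_mul, hn, star_mul, star_star, ← two_mul, map_inv₀, h2', inv_mul_cancel_left₀ h20]
  apply mul_left_cancel₀ hy
  rw [← hc, ← Algebra.commutes, hc, mul_add, add_mul, star_mul, star_mul, mul_assoc (star x), h1,
    ← mul_assoc y (star y), h2, Algebra.commutes, mul_assoc]

end Algebra

/-! ### Hermitian spaces -/

/-- A non-degenerate `ε`-Hermitian form on a right `D`-vector space `U` (that is, a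
`Dᵐᵒᵖ`-module; `u a` is written `MulOpposite.op a • u`). -/
structure RightHermitianForm (F D : Type*) [Field F] [DivisionRing D] [Algebra F D] [StarRing D]
    (ε : ℤˣ) (U : Type*) [AddCommGroup U] [Module F U] [Module Dᵐᵒᵖ U] where
  form : U →ₗ[F] U →ₗ[F] D
  form_smul : ∀ (u u' : U) (a : D), form u (MulOpposite.op a • u') = form u u' * a
  form_symm : ∀ u u' : U, form u u' = ε • star (form u' u)
  nondegenerate : ∀ u : U, (∀ u' : U, form u u' = 0) → u = 0

/-- A non-degenerate `ε`-Hermitian form on a left `D`-vector space `V`. -/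
structure LeftHermitianForm (F D : Type*) [Field F] [DivisionRing D] [Algebra F D] [StarRing D]
    (ε : ℤˣ) (V : Type*) [AddCommGroup V] [Module F V] [Module D V] where
  form : V →ₗ[F] V →ₗ[F] D
  smul_form : ∀ (v v' : V) (a : D), form (a • v) v' = a * form v v'
  form_symm : ∀ v v' : V, form v v' = ε • star (form v' v)
  nondegenerate : ∀ v : V, (∀ v' : V, form v v' = 0) → v = 0

section Spaces

variable {F D : Type*} [Field F] [DivisionRing D] [Algebra F D] [StarRing D]
  {ε : ℤˣ} {U : Type*} [AddCommGroup U] [Module F U] [Module Dᵐᵒᵖ U]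

theorem star_units_smul (e : ℤˣ) (x : D) : star (e • x) = e • star x := by
  rcases Int.units_eq_one_or e with rfl | rfl <;> simp [Units.smul_def]

theorem RightHermitianForm.smul_form (hU : RightHermitianForm F D ε U) (u u' : U) (a : D) :
    hU.form (MulOpposite.op a • u) u' = star a * hU.form u u' := by
  rw [hU.form_symm, hU.form_smul, star_mul, hU.form_symm u u', mul_smul_comm]

theorem LeftHermitianForm.form_smul {V : Type*} [AddCommGroup V] [Module F V] [Module D V]
    (hV : LeftHermitianForm F D ε V) (v v' : V) (a : D) :
    hV.form v (a • v') = hV.form v v' * star a := by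
  rw [hV.form_symm, hV.smul_form, star_mul, hV.form_symm v v', smul_mul_assoc]

/-- `X` is totally isotropic. -/
def IsTotallyIsotropic (hU : RightHermitianForm F D ε U) (X : Submodule Dᵐᵒᵖ U) : Prop :=
  ∀ x ∈ X, ∀ y ∈ X, hU.form x y = 0

/-- The split rank: the maximal dimension of a totally isotropic subspace. -/
def splitRank (hU : RightHermitianForm F D ε U) : ℕ :=
  sSup {n : ℕ | ∃ X : Submodule Dᵐᵒᵖ U,
    IsTotallyIsotropic hU X ∧ Module.finrank Dᵐᵒᵖ X = n}

/-- `U` is split: `dim U = 2 rank U`. -/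
def IsSplit (hU : RightHermitianForm F D ε U) : Prop :=
  Module.finrank Dᵐᵒᵖ U = 2 * splitRank hU

/-- `X` is a Lagrangian subspace. -/
def IsLagrangian (hU : RightHermitianForm F D ε U) (X : Submodule Dᵐᵒᵖ U) : Prop :=
  IsTotallyIsotropic hU X ∧ Module.finrank Dᵐᵒᵖ U = 2 * Module.finrank Dᵐᵒᵖ X

/-- The isometry group `G(U)`. -/
def isometryGroup (hU : RightHermitianForm F D ε U) : Subgroup (U ≃ₗ[Dᵐᵒᵖ] U) where
  carrier := {g | ∀ u u' : U, hU.form (g u) (g u') = hU.form u u'}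
  one_mem' _ _ := rfl
  mul_mem' {g g'} hg hg' u u' := by
    rw [LinearEquiv.mul_apply, LinearEquiv.mul_apply, hg, hg']
  inv_mem' {g} hg u u' := by
    rw [← hg (g⁻¹ u) (g⁻¹ u')]
    change hU.form (g (g.symm u)) (g (g.symm u')) = _
    rw [g.apply_symm_apply, g.apply_symm_apply]

/-- `G(U)` with the topology of pointwise convergence, for the canonical topology of the
finite-dimensional `F`-vector space `U`. -/
instance [TopologicalSpace F] (hU : RightHermitianForm F D ε U) :
    TopologicalSpace (isometryGroup hU) :=
  TopologicalSpace.induced (fun (g : isometryGroup hU) (u : U) => (g : U ≃ₗ[Dᵐᵒᵖ] U) u)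
    (@Pi.topologicalSpace U (fun _ => U) (fun _ => moduleTopology F U))

/-- The Siegel parabolic `P(X)`: the stabilizer of `X` in `G(U)`. -/
def siegelParabolic (hU : RightHermitianForm F D ε U) (X : Submodule Dᵐᵒᵖ U) :
    Subgroup (isometryGroup hU) where
  carrier := {g | ∀ x : U, (g : U ≃ₗ[Dᵐᵒᵖ] U) x ∈ X ↔ x ∈ X}
  one_mem' _ := Iff.rfl
  mul_mem' {g g'} hg hg' x := (hg _).trans (hg' x)
  inv_mem' {g} hg x := by
    rw [← hg]
    change (g : U ≃ₗ[Dᵐᵒᵖ] U) ((g : U ≃ₗ[Dᵐᵒᵖ] U).symm x) ∈ X ↔ _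
    rw [LinearEquiv.apply_symm_apply]

/-- The restriction to `X` of an element of `P(X)`. -/
def restrictTo (hU : RightHermitianForm F D ε U) (X : Submodule Dᵐᵒᵖ U)
    (g : siegelParabolic hU X) : Module.End Dᵐᵒᵖ X :=
  ((g : isometryGroup hU) : U ≃ₗ[Dᵐᵒᵖ] U).toLinearMap.restrict fun x hx => (g.2 x).2 hx

end Spaces

/-! ### The cover `Ḡ(U) → G(U)` -/

section Cover

variable {F D : Type*} [Field F] [TopologicalSpace F] [DivisionRing D] [Algebra F D] [StarRing D]
  {ε : ℤˣ} {U : Type*} [AddCommGroup U] [Module F U] [Module Dᵐᵒᵖ U]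

variable (F D) in
/-- `(D, ε) = (F, -1)`: the case where `U` is a symplectic space. -/
def IsSymplecticCase (ε : ℤˣ) : Prop := Module.finrank F D = 1 ∧ ε = -1

/-- `p : Gb → G(U)` is a topological central extension by a group of order two (so `Gb` is a
Hausdorff topological group and `p` is a continuous open surjection) which does not split, unless
`U = 0`; a splitting is a continuous homomorphism which is a section of `p`. -/
structure IsMetaplecticCover (hU : RightHermitianForm F D ε U) {Gb : Type*} [Group Gb]
    [TopologicalSpace Gb] (p : Gb →* isometryGroup hU) : Prop where
  t2 : T2Space Gb
  isOpenQuotientMap : IsOpenQuotientMap p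
  central : p.ker ≤ Subgroup.center Gb
  card_ker : Nat.card p.ker = 2
  nonsplit : Nontrivial U →
    ¬ ∃ s : isometryGroup hU →* Gb, Continuous s ∧ ∀ g, p (s g) = g

/-- `p : Gb → G(U)` is the covering homomorphism `Ḡ(U) → G(U)`: it is the metaplectic double cover
if `U` is a symplectic space, and an isomorphism of topological groups otherwise. -/
structure IsModifiedCover (hU : RightHermitianForm F D ε U) {Gb : Type*} [Group Gb]
    [TopologicalSpace Gb] (p : Gb →* isometryGroup hU) : Prop where
  metaplectic : IsSymplecticCase F D ε → IsMetaplecticCover hU p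
  linear : ¬ IsSymplecticCase F D ε → IsHomeomorph p

end Cover

/-! ### The tensor product `U ⊗_D V` and its symplectic form -/

section Tensor

variable {F D : Type*} [Field F] [CharZero F] [DivisionRing D] [Algebra F D] [StarRing D]
  [IsTypeI F D] {ε ε' : ℤˣ}
  {U : Type*} [AddCommGroup U] [Module F U] [Module Dᵐᵒᵖ U] [IsScalarTower F Dᵐᵒᵖ U]
  {V : Type*} [AddCommGroup V] [Module F V] [Module D V] [IsScalarTower F D V]

variable (F D U V) in
/-- The relations `u a ⊗ v = u ⊗ a v`. -/
def balancing : Submodule F (U ⊗[F] V) :=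
  Submodule.span F {x | ∃ (u : U) (a : D) (v : V),
    x = (MulOpposite.op a • u) ⊗ₜ[F] v - u ⊗ₜ[F] (a • v)}

variable (F D U V) in
/-- The tensor product `U ⊗_D V` of the right `D`-space `U` and the left `D`-space `V`. -/
abbrev DTensor : Type _ := (U ⊗[F] V) ⧸ balancing F D U V

variable (F D) in
/-- The pure tensor `u ⊗ v` in `U ⊗_D V`. -/
def dtmul (u : U) (v : V) : DTensor F D U V := Submodule.Quotient.mk (u ⊗ₜ[F] v)

/-- The form `(⟨u, u'⟩ ⟨v, v'⟩^ι + ⟨v, v'⟩ ⟨u, u'⟩^ι) / 2` on `U ⊗_F V`. -/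
def preTensorForm (hU : RightHermitianForm F D ε U) (hV : LeftHermitianForm F D ε' V) :
    U ⊗[F] V →ₗ[F] U ⊗[F] V →ₗ[F] F :=
  (LinearMap.BilinMap.tmul hU.form hV.form).compr₂
    (TensorProduct.lift (((LinearMap.mul F D).compl₂ (starLin F D)).compr₂ (halfTrace F D)))

theorem preTensorForm_tmul (hU : RightHermitianForm F D ε U) (hV : LeftHermitianForm F D ε' V)
    (u u' : U) (v v' : V) :
    preTensorForm hU hV (u ⊗ₜ v) (u' ⊗ₜ v')
      = halfTrace F D (hU.form u u' * star (hV.form v v')) := rfl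

/-- The symplectic form on `U ⊗_D V`. -/
def tensorForm (hU : RightHermitianForm F D ε U) (hV : LeftHermitianForm F D ε' V) :
    DTensor F D U V →ₗ[F] DTensor F D U V →ₗ[F] F :=
  (preTensorForm hU hV).liftQ₂ (balancing F D U V) (balancing F D U V)
    (by
      rw [balancing, Submodule.span_le]
      rintro _ ⟨u, a, v, rfl⟩
      rw [SetLike.mem_coe, LinearMap.mem_ker, map_sub, sub_eq_zero]
      ext u' v'
      simp only [TensorProduct.AlgebraTensorModule.curry_apply, TensorProduct.curry_apply,
        LinearMap.restrictScalars_self]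
      rw [preTensorForm_tmul, preTensorForm_tmul, hU.smul_form, hV.smul_form, star_mul,
        mul_assoc, halfTrace_mul_comm, mul_assoc])
    (by
      rw [balancing, Submodule.span_le]
      rintro _ ⟨u', a, v', rfl⟩
      rw [SetLike.mem_coe, LinearMap.mem_ker, map_sub, sub_eq_zero]
      ext u v
      simp only [TensorProduct.AlgebraTensorModule.curry_apply, TensorProduct.curry_apply,
        LinearMap.restrictScalars_self, LinearMap.flip_apply]
      rw [preTensorForm_tmul, preTensorForm_tmul, hU.form_smul, hV.form_smul, star_mul,
        star_star, mul_assoc])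

theorem tensorForm_dtmul (hU : RightHermitianForm F D ε U) (hV : LeftHermitianForm F D ε' V)
    (u u' : U) (v v' : V) :
    algebraMap F D (tensorForm hU hV (dtmul F D u v) (dtmul F D u' v'))
      = algebraMap F D 2⁻¹ * (hU.form u u' * star (hV.form v v')
          + hV.form v v' * star (hU.form u u')) := by
  change algebraMap F D (preTensorForm hU hV (u ⊗ₜ v) (u' ⊗ₜ v')) = _
  rw [preTensorForm_tmul, algebraMap_halfTrace, star_mul, star_star]

variable (V) in
/-- The subspace `X ⊗_D V` of `U ⊗_D V`. -/
def subTensor (X : Submodule Dᵐᵒᵖ U) : Submodule F (DTensor F D U V) :=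
  Submodule.span F {w | ∃ x ∈ X, ∃ v : V, w = dtmul F D x v}

variable (F V) in
/-- The action `u ⊗ v ↦ g u ⊗ v` of a `D`-linear map `g` on `U ⊗_D V`. -/
def tensorMap (g : U →ₗ[Dᵐᵒᵖ] U) : DTensor F D U V →ₗ[F] DTensor F D U V :=
  Submodule.mapQ _ _ (TensorProduct.map (g.restrictScalars F) LinearMap.id)
    (by
      rw [balancing, Submodule.span_le]
      rintro _ ⟨u, a, v, rfl⟩
      refine Submodule.subset_span ⟨g u, a, v, ?_⟩
      rw [map_sub, TensorProduct.map_tmul, TensorProduct.map_tmul, LinearMap.restrictScalars_apply,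
        map_smul]
      rfl)

theorem tensorMap_dtmul (g : U →ₗ[Dᵐᵒᵖ] U) (u : U) (v : V) :
    tensorMap F V g (dtmul F D u v) = dtmul F D (g u) v := rfl

theorem DTensor.induction {P : DTensor F D U V → Prop} (w : DTensor F D U V) (h0 : P 0)
    (h1 : ∀ u v, P (dtmul F D u v)) (h2 : ∀ x y, P x → P y → P (x + y)) : P w := by
  obtain ⟨x, rfl⟩ := Submodule.Quotient.mk_surjective _ w
  induction x using TensorProduct.induction_on with
  | zero => exact h0
  | tmul u v => exact h1 u v
  | add x y hx hy => exact h2 _ _ hx hy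

theorem tensorMap_one (w : DTensor F D U V) : tensorMap F V (1 : U →ₗ[Dᵐᵒᵖ] U) w = w := by
  induction w using DTensor.induction with
  | h0 => exact map_zero _
  | h1 u v => rfl
  | h2 x y hx hy => rw [map_add, hx, hy]

theorem tensorMap_mul (g g' : U →ₗ[Dᵐᵒᵖ] U) (w : DTensor F D U V) :
    tensorMap F V (g * g') w = tensorMap F V g (tensorMap F V g' w) := by
  induction w using DTensor.induction with
  | h0 => simp only [map_zero]
  | h1 u v => rfl
  | h2 x y hx hy => simp only [map_add, hx, hy]

theorem tensorForm_tensorMap (hU : RightHermitianForm F D ε U) (hV : LeftHermitianForm F D ε' V)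
    (g : isometryGroup hU) (w w' : DTensor F D U V) :
    tensorForm hU hV (tensorMap F V (g : U ≃ₗ[Dᵐᵒᵖ] U).toLinearMap w)
      (tensorMap F V (g : U ≃ₗ[Dᵐᵒᵖ] U).toLinearMap w') = tensorForm hU hV w w' := by
  induction w using DTensor.induction with
  | h0 => simp only [map_zero, LinearMap.zero_apply]
  | h2 x y hx hy => simp only [map_add, LinearMap.add_apply, hx, hy]
  | h1 u v =>
    induction w' using DTensor.induction with
    | h0 => simp only [map_zero]
    | h2 x y hx hy => simp only [map_add, hx, hy]
    | h1 u' v' =>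
      apply (algebraMap F D).injective
      rw [tensorMap_dtmul, tensorMap_dtmul, tensorForm_dtmul, tensorForm_dtmul]
      simp only [LinearEquiv.coe_coe, g.2 u u']

end Tensor

/-! ### Heisenberg groups and the Jacobi group -/

/-- The Heisenberg group `W × F` of a space with bilinear form `B`, with multiplication
`(w, t) (w', t') = (w + w', t + t' + B w w')`. -/
@[ext]
structure Heisenberg {F W : Type*} [Field F] [AddCommGroup W] [Module F W]
    (B : W →ₗ[F] W →ₗ[F] F) where
  vec : W
  scal : F

section Heisenberg

variable {F W : Type*} [Field F] [AddCommGroup W] [Module F W] {B : W →ₗ[F] W →ₗ[F] F}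

instance : Mul (Heisenberg B) := ⟨fun a b => ⟨a.vec + b.vec, a.scal + b.scal + B a.vec b.vec⟩⟩
instance : One (Heisenberg B) := ⟨⟨0, 0⟩⟩
instance : Inv (Heisenberg B) := ⟨fun a => ⟨-a.vec, -a.scal + B a.vec a.vec⟩⟩

theorem Heisenberg.mul_def (a b : Heisenberg B) :
    a * b = ⟨a.vec + b.vec, a.scal + b.scal + B a.vec b.vec⟩ := rfl
theorem Heisenberg.one_def : (1 : Heisenberg B) = ⟨0, 0⟩ := rfl
theorem Heisenberg.inv_def (a : Heisenberg B) :
    a⁻¹ = ⟨-a.vec, -a.scal + B a.vec a.vec⟩ := rfl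

instance : Group (Heisenberg B) :=
  Group.ofLeftAxioms
    (fun a b c => by
      simp only [Heisenberg.mul_def, map_add, LinearMap.add_apply]
      ext
      · exact add_assoc _ _ _
      · dsimp only
        ring)
    (fun a => by simp [Heisenberg.mul_def, Heisenberg.one_def])
    (fun a => by simp [Heisenberg.mul_def, Heisenberg.one_def, Heisenberg.inv_def])

/-- The topology of `W × F`, where `W` has the canonical topology of a finite-dimensional
`F`-vector space. -/
instance [TopologicalSpace F] : TopologicalSpace (Heisenberg B) :=
  TopologicalSpace.induced (fun a => (a.vec, a.scal))
    (@instTopologicalSpaceProd W F (moduleTopology F W) _)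

end Heisenberg

section Jacobi

variable {F D : Type*} [Field F] [CharZero F] [DivisionRing D] [Algebra F D] [StarRing D]
  [IsTypeI F D] {ε ε' : ℤˣ}
  {U : Type*} [AddCommGroup U] [Module F U] [Module Dᵐᵒᵖ U] [IsScalarTower F Dᵐᵒᵖ U]
  {V : Type*} [AddCommGroup V] [Module F V] [Module D V] [IsScalarTower F D V]

/-- The action `g · (u ⊗ v, t) = (g u ⊗ v, t)` of `G(U)` on `H(U ⊗_D V)`. -/
def isometryAct (hU : RightHermitianForm F D ε U) (hV : LeftHermitianForm F D ε' V) :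
    isometryGroup hU →* MulAut (Heisenberg (tensorForm hU hV)) where
  toFun g :=
    { toFun := fun a => ⟨tensorMap F V (g : U ≃ₗ[Dᵐᵒᵖ] U).toLinearMap a.vec, a.scal⟩
      invFun := fun a => ⟨tensorMap F V ((g⁻¹ : isometryGroup hU) : U ≃ₗ[Dᵐᵒᵖ] U).toLinearMap a.vec,
        a.scal⟩
      left_inv := fun a => by
        ext
        · dsimp only
          rw [← tensorMap_mul]
          convert tensorMap_one a.vec
          ext u
          exact LinearEquiv.symm_apply_apply _ u
        · rfl
      right_inv := fun a => by
        ext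
        · dsimp only
          rw [← tensorMap_mul]
          convert tensorMap_one a.vec
          ext u
          exact LinearEquiv.apply_symm_apply (g : U ≃ₗ[Dᵐᵒᵖ] U) u
        · rfl
      map_mul' := fun a b => by
        simp only [Heisenberg.mul_def, map_add, tensorForm_tensorMap] }
  map_one' := by
    ext a
    · exact tensorMap_one a.vec
    · rfl
  map_mul' g g' := by
    ext a
    · exact tensorMap_mul _ _ a.vec
    · rfl

/-- The modified Jacobi group `J̄_U(V) = Ḡ(U) ⋉ H(U ⊗_D V)`, where `Ḡ(U) = Gb` acts through the
covering homomorphism `p`. -/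
abbrev Jacobi (hU : RightHermitianForm F D ε U) (hV : LeftHermitianForm F D ε' V)
    {Gb : Type*} [Group Gb] (p : Gb →* isometryGroup hU) : Type _ :=
  Heisenberg (tensorForm hU hV) ⋊[(isometryAct hU hV).comp p] Gb

/-- `ω` is a genuine smooth oscillator representation of `J̄_U(V)`, so that `(V, ω)` is an enhanced
oscillator representation of `Ḡ(U)`. -/
structure IsEnhancedOscillator [TopologicalSpace F] (ψ : AddChar F Circle)
    (hU : RightHermitianForm F D ε U) (hV : LeftHermitianForm F D (-ε) V)
    {Gb : Type*} [Group Gb] [TopologicalSpace Gb] (p : Gb →* isometryGroup hU)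
    {S : Type*} [AddCommGroup S] [Module ℂ S] (ω : Representation ℂ (Jacobi hU hV p) S) :
    Prop where
  /-- The stabilizer of every vector is open, `J̄_U(V)` having the topology of the product
  `H(U ⊗_D V) × Ḡ(U)`. -/
  smooth : ∀ φ : S,
    IsOpen {x : Heisenberg (tensorForm hU hV) × Gb | ω ⟨x.1, x.2⟩ φ = φ}
  /-- The restriction to the Heisenberg group is irreducible. -/
  irreducible : Representation.IsIrreducible
    (ω.comp SemidirectProduct.inl : Representation ℂ (Heisenberg (tensorForm hU hV)) S)
  /-- The restriction to the Heisenberg group has central character `ψ`. -/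
  central_char : ∀ (t : F) (φ : S), ω (SemidirectProduct.inl ⟨0, t⟩) φ = (ψ t : ℂ) • φ
  /-- If `U` is symplectic, the nontrivial element of the kernel of `Ḡ(U) → G(U)` acts by
  `(-1) ^ dim V`. -/
  genuine : IsSymplecticCase F D ε → ∀ z ∈ p.ker, z ≠ 1 →
    ∀ φ : S, ω (SemidirectProduct.inr z) φ = (-1 : ℂ) ^ Module.finrank D V • φ

end Jacobi

/-! ### The character `|·|_X` -/

/-- The normalized absolute value of a locally compact field `E`: `|x|_E` is the factor by which
multiplication by `x` scales Haar measure, and `|0|_E = 0`. -/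
def normalizedAbs {E : Type*} [Field E] [TopologicalSpace E] [IsTopologicalRing E]
    [LocallyCompactSpace E] (x : E) : ℝ :=
  open Classical in
  if h : x = 0 then 0 else (MeasureTheory.distribHaarChar E (Units.mk0 x h) : ℝ≥0)

/-- The degree of a central simple algebra: the square root of its dimension. -/
def csaDegree (E A : Type*) [Field E] [Ring A] [Algebra E A] : ℕ :=
  Nat.sqrt (Module.finrank E A)

/-- `c` is the reduced norm of the element `a` of the central simple `E`-algebra `A`: it is the
determinant of the image of `a` under an isomorphism of `A`, after extension of scalars to an
algebraic closure of `E`, with a matrix algebra. -/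
def IsReducedNorm {E A : Type*} [Field E] [Ring A] [Algebra E A] (a : A) (c : E) : Prop :=
  ∃ (n : ℕ) (f : AlgebraicClosure E ⊗[E] A ≃ₐ[AlgebraicClosure E]
      Matrix (Fin n) (Fin n) (AlgebraicClosure E)),
    algebraMap E (AlgebraicClosure E) c = (f (1 ⊗ₜ[E] a)).det

/-- The reduced norm of a central simple `E`-algebra `A`. -/
def reducedNorm (E : Type*) {A : Type*} [Field E] [Ring A] [Algebra E A] (a : A) : E :=
  open Classical in
  if h : ∃ c : E, IsReducedNorm a c then h.choose else 0

section SiegelCharacter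

variable {F D : Type*} [Field F] [DivisionRing D] [Algebra F D] [StarRing D]
  (E : Type*) [Field E] [Algebra E D] [TopologicalSpace E] [IsTopologicalRing E]
  [LocallyCompactSpace E] {ε : ℤˣ}
  {U : Type*} [AddCommGroup U] [Module F U] [Module E U] [Module Dᵐᵒᵖ U]
  [IsScalarTower E Dᵐᵒᵖ U]

/-- `|g|_X = |det (g|_X)|_E ^ δ_D` for `g` in `P(X)`, where `E` is the center of `D`, `det` is the
reduced norm on the central simple `E`-algebra `End_D(X)` and `δ_D` is the degree of `D`. -/
def siegelAbs (hU : RightHermitianForm F D ε U) (X : Submodule Dᵐᵒᵖ U)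
    (g : siegelParabolic hU X) : ℝ :=
  normalizedAbs (reducedNorm E (restrictTo hU X g)) ^ csaDegree E D

end SiegelCharacter

/-! ### The characters `κ_{σ,X}` -/

section KudlaCharacter

variable {F D : Type*} [Field F] [CharZero F] [DivisionRing D] [Algebra F D] [StarRing D]
  [IsTypeI F D]
  (E : Type*) [Field E] [Algebra E D] [TopologicalSpace E] [IsTopologicalRing E]
  [LocallyCompactSpace E] {ε ε' : ℤˣ}
  {U : Type*} [AddCommGroup U] [Module F U] [Module E U] [Module Dᵐᵒᵖ U]
  [IsScalarTower F Dᵐᵒᵖ U] [IsScalarTower E Dᵐᵒᵖ U]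
  {V : Type*} [AddCommGroup V] [Module F V] [Module D V] [IsScalarTower F D V]
  {hU : RightHermitianForm F D ε U} {hV : LeftHermitianForm F D ε' V}
  {Gb : Type*} [Group Gb] {p : Gb →* isometryGroup hU}
  {S : Type*} [AddCommGroup S] [Module ℂ S]

/-- The preimage `P̄(X)` of `P(X)` in `Ḡ(U)`. -/
def siegelCover (p : Gb →* isometryGroup hU) (X : Submodule Dᵐᵒᵖ U) : Subgroup Gb :=
  (siegelParabolic hU X).comap p

/-- `l` is a nonzero linear functional on `ω` which is invariant under
`X ⊗_D V ⊂ H(U ⊗_D V)`. -/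
def IsInvariantFunctional (ω : Representation ℂ (Jacobi hU hV p) S) (X : Submodule Dᵐᵒᵖ U)
    (l : Module.Dual ℂ S) : Prop :=
  l ≠ 0 ∧ ∀ w ∈ subTensor (F := F) V X, ∀ φ : S, l (ω (SemidirectProduct.inl ⟨w, 0⟩) φ) = l φ

/-- `κ` is the character `κ_{σ,X}` of `P̄(X)`, where `σ = (V, ω)`:
`l (h · φ) = κ h * |h|_X ^ (dim V / 2) * l φ` for a nonzero linear functional `l` on `ω` which is
invariant under `X ⊗_D V`. -/
def IsKudlaCharacter (ω : Representation ℂ (Jacobi hU hV p) S) (X : Submodule Dᵐᵒᵖ U)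
    (κ : siegelCover p X →* ℂˣ) : Prop :=
  ∃ l : Module.Dual ℂ S, IsInvariantFunctional ω X l ∧
    ∀ (h : siegelCover p X) (φ : S),
      l (ω (SemidirectProduct.inr (h : Gb)) φ)
        = (κ h : ℂ) *
          ((siegelAbs E hU X ⟨p h, h.2⟩ ^ ((Module.finrank D V : ℝ) / 2) : ℝ) : ℂ) * l φ

end KudlaCharacter

end Kudla

end

/-!
The vectors of `W = U ⊗_D V` act on `ω` by an irreducible smooth Weyl system, for which `X ⊗_D V`
and `Y ⊗_D V` are Lagrangian subspaces `L` and `M` of `W`. For every Lagrangian subspace there is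
exactly one invariant functional up to scalars, so that the stabilizer acts on it by a character.
If `l` is the `L`-invariant functional, then integrating `l (w · φ)` over `w ∈ M / (M ∩ L)` gives
the `M`-invariant one. Transporting the action of `h` through this integral multiplies the
eigenvalue by the module `|det h|_M| / |det h|_{M ∩ L}|` of `h` on `M / (M ∩ L)`. Doing the same
with `L` and `M` exchanged, and using `|det h|_L| = |h|_X ^ dim V`, one finds `κ_X h = κ_Y h`.
-/

noncomputable section

open scoped TensorProduct NNReal

namespace Kudla

section CentralSimple

open MulOpposite

variable {E A : Type*} [Field E] [Ring A] [Algebra E A] [Module.Finite E A]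

theorem mulLeftRight_surjective [IsSimpleRing A] [Algebra.IsCentral E A] :
    Function.Surjective (AlgHom.mulLeftRight E A) := by
  let M := (AlgHom.mulLeftRight E A).range
  have mul_mem (a b : A) : LinearMap.mulLeft E a * LinearMap.mulRight E b ∈ M :=
    ⟨a ⊗ₜ op b, by ext; simp [mul_assoc]⟩
  have mul_mul_mem (N : Submodule M A) (a b : A) {x : A} (hx : x ∈ N) : a * x * b ∈ N := by
    simpa [Subalgebra.smul_def, mul_assoc] using N.smul_mem ⟨_, mul_mem a b⟩ hx
  have map_mul_mul (f : Module.End M A) (a b x : A) : f (a * x * b) = a * f x * b := by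
    simpa [Subalgebra.smul_def, mul_assoc] using f.map_smul ⟨_, mul_mem a b⟩ x
  have isSimple : IsSimpleModule M A := by
    refine (isSimpleModule_iff _ _).2 ⟨fun N => ?_⟩
    let I : Ideal A :=
      { N with smul_mem' := fun a x hx => by simpa using mul_mul_mem N a 1 hx }
    have hI : I.IsTwoSided :=
      ⟨fun {x} b (hx : x ∈ N) => show x * b ∈ N by simpa using mul_mul_mem N 1 b hx⟩
    have := (isSimpleRing_iff_isTwoSided_imp.1 ‹_›).2 I hI
    simpa [SetLike.ext_iff, I] using this
  have commutant (f : Module.End M A) : ∃ c : E, ∀ x, f x = c • x := by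
    have hcenter : f 1 ∈ Subalgebra.center E A := Subalgebra.mem_center_iff.2 fun a => by
      simpa using (map_mul_mul f a 1 1).symm.trans (by simpa using map_mul_mul f 1 a 1)
    obtain ⟨c, hc⟩ := (Algebra.IsCentral.mem_center_iff E).1 hcenter
    refine ⟨c, fun x => ?_⟩
    rw [Algebra.smul_def, ← hc]
    simpa using map_mul_mul f 1 x 1
  intro T
  classical
  let T' : Module.End (Module.End M A) A :=
    { T with
      map_smul' := fun f x => by
        obtain ⟨c, hc⟩ := commutant f
        simp [hc] }
  let b := Module.finBasis E A
  obtain ⟨⟨_, z, rfl⟩, hz⟩ := jacobson_density (R := M) T' (Finset.univ.image b)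
  exact ⟨z, b.ext fun i => (hz (b i) (Finset.mem_image_of_mem b (Finset.mem_univ i))).symm⟩

/-- A two-sided ideal of `K ⊗ A` is stable under `id ⊗ T` for all linear maps `T : A → A`, these
being of the form `x ↦ ∑ aᵢ x bᵢ`. -/
theorem lTensor_mem_of_isTwoSided {K : Type*} [CommRing K] [Algebra E K] [IsSimpleRing A]
    [Algebra.IsCentral E A] (I : Ideal (K ⊗[E] A)) [I.IsTwoSided] (T : A →ₗ[E] A)
    {z : K ⊗[E] A} (hz : z ∈ I) : T.lTensor K z ∈ I := by
  obtain ⟨t, rfl⟩ := mulLeftRight_surjective T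
  induction t using TensorProduct.induction_on with
  | zero => simp
  | add t t' ht ht' =>
    rw [map_add, LinearMap.lTensor_add]
    exact I.add_mem ht ht'
  | tmul a b =>
    have : (AlgHom.mulLeftRight E A (a ⊗ₜ b)).lTensor K z = (1 ⊗ₜ a) * z * (1 ⊗ₜ b.unop) := by
      clear hz
      induction z using TensorProduct.induction_on with
      | zero => simp
      | tmul k x => simp
      | add x y hx hy => simp only [map_add, mul_add, add_mul, hx, hy]
    rw [this]
    exact I.mul_mem_right _ (I.mul_mem_left _ hz)

theorem isSimpleRing_tensorProduct (E K A : Type*) [Field E] [Ring A] [Algebra E A]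
    [Module.Finite E A] [Field K] [Algebra E K] [IsSimpleRing A] [Algebra.IsCentral E A] :
    IsSimpleRing (K ⊗[E] A) := by
  refine isSimpleRing_iff_isTwoSided_imp.2
    ⟨inferInstance, fun I _ => or_iff_not_imp_left.2 fun hI => ?_⟩
  obtain ⟨z, hz, hz0⟩ := Submodule.exists_mem_ne_zero_of_ne_bot hI
  let b := Module.finBasis E A
  let coord := TensorProduct.equivFinsuppOfBasisRight (M := K) b
  obtain ⟨i, hi⟩ : ∃ i, coord z i ≠ 0 := by
    by_contra! h
    exact hz0 (coord.map_eq_zero_iff.1 (Finsupp.ext h))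
  let T : A →ₗ[E] A := (Algebra.linearMap E A).comp (b.coord i)
  have hT : T.lTensor K z = coord z i ⊗ₜ 1 := by
    clear hz hz0 hi
    induction z using TensorProduct.induction_on with
    | zero => simp
    | tmul k a => simp [T, coord, Algebra.algebraMap_eq_smul_one, TensorProduct.smul_tmul']
    | add x y hx hy => simp only [map_add, hx, hy, Finsupp.add_apply, TensorProduct.add_tmul]
  refine (Ideal.eq_top_iff_one I).2 ?_
  simpa [hT, inv_mul_cancel₀ hi, ← Algebra.TensorProduct.one_def] using
    I.mul_mem_left ((coord z i)⁻¹ ⊗ₜ 1) (lTensor_mem_of_isTwoSided I T hz)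

end CentralSimple

section Endomorphisms

variable {E R X : Type*} [Field E] [DivisionRing R] [Algebra E R] [AddCommGroup X] [Module E X]
  [Module R X] [IsScalarTower E R X] [Module.Finite R X]

variable (R X) in
theorem isSimpleRing_end [Nontrivial X] : IsSimpleRing (Module.End R X) :=
  have : Nonempty (Fin (Module.finrank R X)) := ⟨⟨0, Module.finrank_pos⟩⟩
  have e := (Module.finBasis R X).equivFun.conjRingEquiv.trans
    (endVecRingEquivMatrixEnd (Fin (Module.finrank R X)) R R)
  have : IsSimpleRing (Module.End R R) :=
    .of_ringEquiv (RingEquiv.moduleEndSelf R) inferInstance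
  .of_ringEquiv e.symm inferInstance

variable [Module.Finite E X]

instance : Module.Finite E (Module.End R X) :=
  Module.Finite.equiv ((Module.finBasis R X).constr E (M' := X))

variable (E R X) in
theorem finrank_end :
    Module.finrank E (Module.End R X) = Module.finrank R X ^ 2 * Module.finrank E R := by
  rw [← ((Module.finBasis R X).constr E (M' := X)).finrank_eq, Module.finrank_pi_fintype,
    Finset.sum_const, Finset.card_univ, Fintype.card_fin, smul_eq_mul,
    ← Module.finrank_mul_finrank E R X]
  ring

theorem det_mulLeft_end (a : Module.End R X) :
    LinearMap.det (LinearMap.mulLeft E a)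
      = LinearMap.det (a.restrictScalars E) ^ Module.finrank R X := by
  let e := (Module.finBasis R X).constr E (M' := X)
  let diag := LinearMap.pi fun i => a.restrictScalars E ∘ₗ
    LinearMap.proj (φ := fun _ : Fin (Module.finrank R X) => X) i
  have conj_diag : (e : _ →ₗ[E] _) ∘ₗ diag ∘ₗ (e.symm : _ →ₗ[E] _) = LinearMap.mulLeft E a := by
    refine LinearMap.ext fun φ => ?_
    obtain ⟨v, rfl⟩ := e.surjective φ
    refine (Module.finBasis R X).ext fun i => ?_
    simp [e, diag]
  rw [← conj_diag, LinearMap.det_conj, LinearMap.det_pi]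
  simp

theorem charpoly_mulLeft_end [Infinite E] (a : Module.End R X) :
    (LinearMap.mulLeft E a).charpoly = (a.restrictScalars E).charpoly ^ Module.finrank R X := by
  refine Polynomial.funext fun t => ?_
  have mulLeft_sub : algebraMap E _ t - LinearMap.mulLeft E a
      = LinearMap.mulLeft E (algebraMap E _ t - a) := by
    ext
    simp [sub_mul]
  rw [Polynomial.eval_pow, LinearMap.eval_charpoly, LinearMap.eval_charpoly, mulLeft_sub,
    det_mulLeft_end]
  rfl

end Endomorphisms

theorem charpoly_mulLeft_matrix {K : Type*} [Field K] [Infinite K] {n : ℕ}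
    (M : Matrix (Fin n) (Fin n) K) : (LinearMap.mulLeft K M).charpoly = M.charpoly ^ n := by
  have conj_mulLeft : Matrix.toLin'.conj (LinearMap.mulLeft K M)
      = LinearMap.mulLeft K (Matrix.toLin' M) := by
    ext1 f
    simp [LinearEquiv.conj_apply, Matrix.toLin'_mul, Module.End.mul_eq_comp]
  rw [← LinearEquiv.charpoly_conj Matrix.toLin', conj_mulLeft]
  simpa using charpoly_mulLeft_end (E := K) (Matrix.toLin' M)

section ReducedNorm

open Polynomial

variable {E : Type*} [Field E] {A : Type*} [Ring A] [Algebra E A]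

theorem isReducedNorm_reducedNorm {a : A} (h : ∃ c : E, IsReducedNorm a c) :
    IsReducedNorm a (reducedNorm E a) := by
  rw [reducedNorm, dif_pos h]
  exact h.choose_spec

variable [Module.Finite E A]

section Splitting

variable {K : Type*} [Field K] [Algebra E K] {n : ℕ}

theorem sq_eq_finrank_of_splitting (f : K ⊗[E] A ≃ₐ[K] Matrix (Fin n) (Fin n) K) :
    n ^ 2 = Module.finrank E A := by
  have := f.toLinearEquiv.finrank_eq
  simp only [Module.finrank_baseChange, Module.finrank_matrix, Module.finrank_self,
    Fintype.card_fin, mul_one] at this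
  rw [this, sq]

theorem map_charpoly_mulLeft [Infinite K] (f : K ⊗[E] A ≃ₐ[K] Matrix (Fin n) (Fin n) K) (a : A) :
    (LinearMap.mulLeft E a).charpoly.map (algebraMap E K) = (f (1 ⊗ₜ a)).charpoly ^ n := by
  have conj_mulLeft : f.toLinearEquiv.conj ((LinearMap.mulLeft E a).baseChange K)
      = LinearMap.mulLeft K (f (1 ⊗ₜ a)) := by
    have : (LinearMap.mulLeft E a).baseChange K = LinearMap.mulLeft K (1 ⊗ₜ[E] a) := by
      ext
      simp
    rw [this]
    ext1 M
    simp [LinearEquiv.conj_apply]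
  rw [← charpoly_mulLeft_matrix, ← LinearMap.charpoly_baseChange, ← conj_mulLeft,
    LinearEquiv.charpoly_conj]

end Splitting

theorem mem_lifts_of_pow_mem_lifts {K : Type*} [Field K] [Algebra E K] [IsGalois E K] {P : K[X]}
    (hP : P.Monic) {n : ℕ} (hn : n ≠ 0) (h : P ^ n ∈ lifts (algebraMap E K)) :
    P ∈ lifts (algebraMap E K) := by
  obtain ⟨Q, hQ⟩ := (mem_lifts _).1 h
  refine (lifts_iff_coeff_lifts _).2 fun i => InfiniteGalois.mem_range_algebraMap_iff_fixed _ |>.2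
    fun σ => ?_
  have hσ : P.map (σ : K →+* K) = P := by
    refine eq_of_monic_of_associated (hP.map _) hP ((Associated.pow_iff hn).1 ?_)
    rw [← Polynomial.map_pow, ← hQ, Polynomial.map_map]
    congr! 2
    ext
    simp
  simpa using congrArg (coeff · i) hσ

theorem exists_isReducedNorm [PerfectField E] [IsSimpleRing A] [Algebra.IsCentral E A] (a : A) :
    ∃ c : E, IsReducedNorm a c := by
  have := isSimpleRing_tensorProduct E (AlgebraicClosure E) A
  obtain ⟨n, hn, ⟨f⟩⟩ := IsSimpleRing.exists_algEquiv_matrix_of_isAlgClosed (AlgebraicClosure E)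
    (AlgebraicClosure E ⊗[E] A)
  have mem_lifts_charpoly := mem_lifts_of_pow_mem_lifts (Matrix.charpoly_monic (f (1 ⊗ₜ a))) hn.ne
    ((mem_lifts _).2 ⟨_, map_charpoly_mulLeft f a⟩)
  obtain ⟨c, hc⟩ := (lifts_iff_coeff_lifts _).1 mem_lifts_charpoly 0
  refine ⟨(-1) ^ n * c, n, f, ?_⟩
  rw [Matrix.det_eq_sign_charpoly_coeff, ← hc]
  simp

end ReducedNorm

section ReducedNormEnd

variable {E R X : Type*} [Field E] [DivisionRing R] [Algebra E R] [AddCommGroup X] [Module E X]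
  [Module R X] [IsScalarTower E R X] [Module.Finite R X]

theorem isReducedNorm_one_of_subsingleton {E A : Type*} [Field E] [Ring A] [Algebra E A]
    [Subsingleton A] (a : A) : IsReducedNorm a (1 : E) :=
  ⟨0, AlgEquiv.ofLinearEquiv 0 (Subsingleton.elim _ _) fun _ _ => Subsingleton.elim _ _, by simp⟩

theorem reducedNorm_end_pow_csaDegree [PerfectField E] [Infinite E] [Algebra.IsCentral E R]
    [Module.Finite E R] [Module.Finite E X] (a : Module.End R X) :
    reducedNorm E a ^ csaDegree E R = LinearMap.det (a.restrictScalars E) := by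
  let K := AlgebraicClosure E
  have hex : ∃ c : E, IsReducedNorm a c := by
    rcases subsingleton_or_nontrivial X with _ | _
    · exact ⟨1, isReducedNorm_one_of_subsingleton a⟩
    · have := isSimpleRing_end R X
      exact exists_isReducedNorm a
  obtain ⟨n, f, hf⟩ := isReducedNorm_reducedNorm hex
  have := isSimpleRing_tensorProduct E K R
  obtain ⟨d, -, ⟨fR⟩⟩ := IsSimpleRing.exists_algEquiv_matrix_of_isAlgClosed K (K ⊗[E] R)
  have hd : d ^ 2 = Module.finrank E R := sq_eq_finrank_of_splitting fR
  have hn : n = Module.finrank R X * d := Nat.pow_left_injective two_ne_zero <| by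
    simp only [mul_pow, hd, sq_eq_finrank_of_splitting f, finrank_end]
  have hX : Module.finrank E X = n * d := by
    rw [← Module.finrank_mul_finrank E R X, ← hd, hn]
    ring
  have charpoly_pow : (f (1 ⊗ₜ a)).charpoly ^ d
      = (a.restrictScalars E).charpoly.map (algebraMap E K) := by
    rcases subsingleton_or_nontrivial X with _ | _
    · obtain rfl : n = 0 := by simp [hn, Module.finrank_zero_of_subsingleton]
      rw [Polynomial.eq_one_of_monic_natDegree_zero (LinearMap.charpoly_monic _) (by
        rw [LinearMap.charpoly_natDegree, Module.finrank_zero_of_subsingleton])]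
      simp [Matrix.charpoly]
    refine Polynomial.eq_of_monic_of_associated ((Matrix.charpoly_monic _).pow _)
      ((LinearMap.charpoly_monic _).map _)
      ((Associated.pow_iff (Module.finrank_pos (R := R) (M := X)).ne').1 ?_)
    rw [← pow_mul, mul_comm, ← hn, ← map_charpoly_mulLeft f, charpoly_mulLeft_end,
      Polynomial.map_pow]
  have hcsa : csaDegree E R = d := by rw [csaDegree, ← hd, Nat.sqrt_eq']
  apply (algebraMap E K).injective
  rw [hcsa, map_pow, hf, Matrix.det_eq_sign_charpoly_coeff, LinearMap.det_eq_sign_charpoly_coeff,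
    mul_pow, Polynomial.coeff_zero_eq_eval_zero, ← Polynomial.eval_pow, charpoly_pow,
    ← Polynomial.coeff_zero_eq_eval_zero, Polynomial.coeff_map, hX, Fintype.card_fin, pow_mul]
  simp

end ReducedNormEnd

section GeneralLinearGroup
open Matrix

variable {K n M : Type*} [Field K] [Infinite K] [Fintype n] [DecidableEq n] [CommMonoid M]

/-- Over an infinite field every transvection is a commutator. -/
theorem map_eq_one_of_eq_transvection (χ : GL n K →* M) {g : GL n K} {i j : n} (hij : i ≠ j)
    {c : K} (hg : (g : Matrix n n K) = transvection i j c) : χ g = 1 := by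
  obtain ⟨a, ha⟩ := (Set.toFinite {(0 : K), 1}).exists_notMem
  obtain ⟨ha0, ha1⟩ : a ≠ 0 ∧ a - 1 ≠ 0 := by simpa [sub_eq_zero] using ha
  let δ : n → K := Function.update 1 i a
  let d : GL n K := .mkOfDetNeZero (diagonal δ) <| by
    rw [det_diagonal, Finset.prod_update_of_mem (Finset.mem_univ i)]
    simpa
  let t : GL n K := .mkOfDetNeZero (transvection i j (c / (a - 1))) <| by
    rw [det_transvection_of_ne _ _ hij]
    exact one_ne_zero
  have h : g * (t * d) = d * t := by
    refine Units.ext ?_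
    have hδi : δ i = a := Function.update_self ..
    have hδj : δ j = 1 := Function.update_of_ne hij.symm ..
    change (g : Matrix n n K) * (transvection i j (c / (a - 1)) * diagonal δ)
      = diagonal δ * transvection i j (c / (a - 1))
    rw [hg, ← Matrix.mul_assoc, transvection_mul_transvection_same _ _ hij]
    simp only [transvection, Matrix.mul_add, Matrix.add_mul, Matrix.one_mul, Matrix.mul_one]
    congr 1
    ext k l
    rw [mul_diagonal, diagonal_mul, single_apply, single_apply]
    split_ifs with hkl
    · rw [← hkl.1, ← hkl.2, hδi, hδj]
      field_simp
      ring
    · rw [zero_mul, mul_zero]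
  refine ((Group.isUnit (t * d)).map χ).mul_right_cancel ?_
  rw [one_mul, ← map_mul, h, map_mul, map_mul, mul_comm]

theorem generalLinearGroup_hom_ext {χ χ' : GL n K →* M}
    (h : ∀ (g : GL n K) (d : n → K), (g : Matrix n n K) = diagonal d → χ g = χ' g) : χ = χ' := by
  suffices ∀ (A : Matrix n n K) (g : GL n K), (g : Matrix n n K) = A → χ g = χ' g from
    MonoidHom.ext fun g => this g g rfl
  intro A g hg
  have hA : det A ≠ 0 := hg ▸ (g.isUnit.map detMonoidHom).ne_zero
  revert g
  refine diagonal_transvection_induction_of_det_ne_zero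
    (fun A => ∀ g : GL n K, (g : Matrix n n K) = A → χ g = χ' g) A hA
    (fun d _ g => h g d) (fun t g hg => ?_)
    fun A B hA hB ihA ihB g hg => ?_
  · rw [map_eq_one_of_eq_transvection χ t.hij hg, map_eq_one_of_eq_transvection χ' t.hij hg]
  · obtain rfl : g = .mkOfDetNeZero A hA * .mkOfDetNeZero B hB := Units.ext hg
    rw [map_mul, map_mul, ihA _ rfl, ihB _ rfl]

end GeneralLinearGroup

section NormalizedAbs

open MeasureTheory Measure

variable {E : Type*} [Field E] [TopologicalSpace E] [IsTopologicalRing E] [LocallyCompactSpace E]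

theorem normalizedAbs_of_ne_zero {x : E} (hx : x ≠ 0) :
    normalizedAbs x = (distribHaarChar E (Units.mk0 x hx) : ℝ≥0) :=
  dif_neg hx

theorem normalizedAbs_zero : normalizedAbs (0 : E) = 0 :=
  dif_pos rfl

theorem normalizedAbs_nonneg (x : E) : 0 ≤ normalizedAbs x := by
  rcases eq_or_ne x 0 with rfl | hx
  · rw [normalizedAbs_zero]
  · rw [normalizedAbs_of_ne_zero hx]
    exact NNReal.coe_nonneg _

theorem normalizedAbs_pos {x : E} (hx : x ≠ 0) : 0 < normalizedAbs x := by
  rw [normalizedAbs_of_ne_zero hx]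
  exact NNReal.coe_pos.2 distribHaarChar_pos

variable (E) in
/-- The normalized absolute value as a homomorphism of monoids. -/
def normalizedAbsHom : E →* ℝ where
  toFun := normalizedAbs
  map_one' := by
    rw [normalizedAbs_of_ne_zero one_ne_zero, Units.mk0_one, map_one, NNReal.coe_one]
  map_mul' x y := by
    rcases eq_or_ne x 0 with rfl | hx
    · rw [zero_mul, normalizedAbs_zero, zero_mul]
    rcases eq_or_ne y 0 with rfl | hy
    · rw [mul_zero, normalizedAbs_zero, mul_zero]
    rw [normalizedAbs_of_ne_zero hx, normalizedAbs_of_ne_zero hy,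
      normalizedAbs_of_ne_zero (mul_ne_zero hx hy), Units.mk0_mul, map_mul, NNReal.coe_mul]

theorem normalizedAbs_one : normalizedAbs (1 : E) = 1 :=
  map_one (normalizedAbsHom E)

theorem normalizedAbs_mul (x y : E) :
    normalizedAbs (x * y) = normalizedAbs x * normalizedAbs y :=
  map_mul (normalizedAbsHom E) x y

theorem normalizedAbs_pow (x : E) (n : ℕ) : normalizedAbs (x ^ n) = normalizedAbs x ^ n :=
  map_pow (normalizedAbsHom E) x n

theorem normalizedAbs_prod {ι : Type*} (s : Finset ι) (f : ι → E) :
    normalizedAbs (∏ i ∈ s, f i) = ∏ i ∈ s, normalizedAbs (f i) :=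
  map_prod (normalizedAbsHom E) f s

end NormalizedAbs

section Determinant

open MeasureTheory Measure Matrix
open scoped Pointwise

variable {F : Type*} [Field F] [ValuativeRel F] [TopologicalSpace F]
  [IsNonarchimedeanLocalField F]

theorem secondCountableTopology_and_infinite (F : Type*) [Field F] [ValuativeRel F]
    [TopologicalSpace F] [IsNonarchimedeanLocalField F] :
    SecondCountableTopology F ∧ Infinite F := by
  let := IsTopologicalAddGroup.rightUniformSpace F
  have := isUniformAddGroup_of_addCommGroup (G := F)
  let : (Valued.v (R := F)).RankOne :=
  { hom' := ValuativeRel.IsRankLeOne.nonempty.some.emb (R := F).comp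
      MonoidWithZeroHom.ValueGroup₀.embedding
    strictMono' := ValuativeRel.IsRankLeOne.nonempty.some.strictMono.comp
      MonoidWithZeroHom.ValueGroup₀.embedding_strictMono }
  open scoped Valued in
  have : ProperSpace F := .of_nontriviallyNormedField_of_weaklyLocallyCompactSpace F
  open scoped Valued in
  exact ⟨secondCountable_of_proper, inferInstance⟩

theorem distribHaarChar_pi {G H ι A : Type*} [Group G] [Group H] [Fintype ι] [AddCommGroup A]
    [TopologicalSpace A] [IsTopologicalAddGroup A] [LocallyCompactSpace A]
    [SecondCountableTopology A] [DistribMulAction G (ι → A)] [ContinuousConstSMul G (ι → A)]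
    [DistribMulAction H A] [ContinuousConstSMul H A] {g : G} {d : ι → H}
    (hd : ∀ (x : ι → A) i, (g • x) i = d i • x i) :
    distribHaarChar (ι → A) g = ∏ i, distribHaarChar A (d i) := by
  borelize A
  let C : TopologicalSpace.PositiveCompacts A := Classical.arbitrary _
  let μ : Measure (ι → A) := Measure.pi fun _ => addHaar
  have : μ.Regular := by
    rw [isAddLeftInvariant_eq_smul μ addHaar]
    infer_instance
  have hμC : μ (Set.univ.pi fun _ => (C : Set A)) = ∏ _i : ι, addHaar (C : Set A) :=
    Measure.pi_pi ..
  have hgC : g • (Set.univ.pi fun _ => (C : Set A)) = Set.univ.pi fun i => d i • (C : Set A) := by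
    ext x
    simp only [Set.mem_smul_set_iff_inv_smul_mem, Set.mem_univ_pi]
    refine forall_congr' fun i => ?_
    rw [← smul_inv_smul g x, hd, inv_smul_smul, inv_smul_smul]
  refine distribHaarChar_eq_of_measure_smul_eq_mul (μ := μ) (hμC.trans_ne ?_) (hμC.trans_ne ?_) ?_
  · exact Finset.prod_ne_zero_iff.2 fun _ _ =>
      (measure_pos_of_nonempty_interior _ C.interior_nonempty).ne'
  · exact ENNReal.prod_ne_top fun _ _ => C.isCompact.measure_lt_top.ne
  · rw [hgC, hμC, Measure.pi_pi, ENNReal.ofNNReal_finsetProd, ← Finset.prod_mul_distrib]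
    simp only [distribHaarChar_mul]

instance {R W : Type*} [CommRing R] [TopologicalSpace R] [AddCommGroup W]
    [Module R W] [TopologicalSpace W] [IsModuleTopology R W] :
    ContinuousConstSMul (LinearMap.GeneralLinearGroup R W) W :=
  have := IsModuleTopology.topologicalAddGroup R W
  ⟨fun g => IsModuleTopology.continuous_of_linearMap g.1⟩

theorem distribHaarChar_toLin {ι : Type*} [Fintype ι] [DecidableEq ι] (g : GL ι F) :
    (distribHaarChar (ι → F) (Matrix.GeneralLinearGroup.toLin g) : ℝ)
      = normalizedAbs (g : Matrix ι ι F).det := by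
  obtain ⟨_, _⟩ := secondCountableTopology_and_infinite F
  let χ : GL ι F →* ℝ := NNReal.toRealHom.toMonoidHom.comp
    ((distribHaarChar (ι → F)).comp Matrix.GeneralLinearGroup.toLin.toMonoidHom)
  let χ' : GL ι F →* ℝ := (normalizedAbsHom F).comp (detMonoidHom.comp (Units.coeHom _))
  suffices χ = χ' from DFunLike.congr_fun this g
  refine generalLinearGroup_hom_ext fun g d hg => ?_
  have hd : ∏ i, d i ≠ 0 := by
    rw [← det_diagonal, ← hg]
    exact (g.isUnit.map detMonoidHom).ne_zero
  rw [Finset.prod_ne_zero_iff] at hd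
  have := distribHaarChar_pi (g := Matrix.GeneralLinearGroup.toLin g)
    (d := fun i => Units.mk0 (d i) (hd i (Finset.mem_univ i))) fun x i => by
      change (g : Matrix ι ι F).mulVec x i = _
      rw [hg, mulVec_diagonal]
      rfl
  change (distribHaarChar (ι → F) (Matrix.GeneralLinearGroup.toLin g) : ℝ)
    = normalizedAbs (g : Matrix ι ι F).det
  rw [this, hg, det_diagonal, normalizedAbs_prod, NNReal.coe_prod]
  exact Finset.prod_congr rfl fun i _ => (normalizedAbs_of_ne_zero _).symm

theorem addHaar_image_linearEquiv {W : Type*} [AddCommGroup W] [Module F W] [Module.Finite F W]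
    [TopologicalSpace W] [IsModuleTopology F W] [MeasurableSpace W] [BorelSpace W]
    (ν : Measure W) [ν.IsAddHaarMeasure] (f : W ≃ₗ[F] W) (A : Set W) :
    ν (f '' A) = ENNReal.ofReal (normalizedAbs (LinearMap.det (f : W →ₗ[F] W))) * ν A := by
  obtain ⟨_, -⟩ := secondCountableTopology_and_infinite F
  have := IsModuleTopology.topologicalAddGroup F W
  borelize F
  let φ := (Module.finBasis F W).equivFun
  let Φ : W ≃L[F] (Fin (Module.finrank F W) → F) :=
    { φ with
      continuous_toFun := IsModuleTopology.continuous_of_linearMap φ.toLinearMap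
      continuous_invFun := IsModuleTopology.continuous_of_linearMap φ.symm.toLinearMap }
  have hν (T : Set W) : ν T = ν.map Φ (Φ '' T) :=
    (congrArg ν (Φ.injective.preimage_image T).symm).trans
      (Φ.toHomeomorph.toMeasurableEquiv.map_apply _).symm
  obtain ⟨g, hg⟩ := Matrix.GeneralLinearGroup.toLin.surjective
    (LinearMap.GeneralLinearGroup.ofLinearEquiv ((φ.symm.trans f).trans φ))
  have hg' : toLin' g.1 = ((φ.symm.trans f).trans φ).toLinearMap :=
    congrArg Units.val hg
  have hΦ : Φ '' (f '' A) = Matrix.GeneralLinearGroup.toLin g • Φ '' A := by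
    rw [hg, Set.image_image, ← Set.image_smul, Set.image_image]
    exact Set.image_congr fun w _ => by
      change φ (f w) = φ (f (φ.symm (φ w)))
      rw [φ.symm_apply_apply]
  have hdet : Matrix.det g.1 = LinearMap.det (f : W →ₗ[F] W) := by
    rw [← LinearMap.det_toLin', hg']
    exact LinearMap.det_conj (f : W →ₗ[F] W) φ
  have : (ν.map Φ).IsAddHaarMeasure := Φ.isAddHaarMeasure_map ν
  have : (ν.map Φ).Regular := by
    rw [isAddLeftInvariant_eq_smul (ν.map Φ) addHaar]
    infer_instance
  rw [hν, hν A, hΦ, ← distribHaarChar_mul, ← hdet, ← distribHaarChar_toLin,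
    ENNReal.ofReal_coe_nnreal]

theorem normalizedAbs_algebraNorm {E : Type*} [Field E] [Algebra F E] [Module.Finite F E]
    [TopologicalSpace E] [IsModuleTopology F E] [IsTopologicalRing E] [LocallyCompactSpace E]
    (x : E) : normalizedAbs (Algebra.norm F x) = normalizedAbs x := by
  rcases eq_or_ne x 0 with rfl | hx
  · rw [normalizedAbs_zero, Algebra.norm_zero, normalizedAbs_zero]
  borelize E
  let A : TopologicalSpace.PositiveCompacts E := Classical.arbitrary _
  let m : E ≃ₗ[F] E := DistribMulAction.toLinearEquiv F E (Units.mk0 x hx)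
  have hm : LinearMap.det (m : E →ₗ[F] E) = Algebra.norm F x := rfl
  have hA : addHaar (Units.mk0 x hx • (A : Set E))
      = (normalizedAbs (Algebra.norm F x)).toNNReal * addHaar (A : Set E) :=
    hm ▸ addHaar_image_linearEquiv addHaar m A
  rw [normalizedAbs_of_ne_zero hx, distribHaarChar_eq_of_measure_smul_eq_mul
    (measure_pos_of_nonempty_interior _ A.interior_nonempty).ne' A.isCompact.measure_lt_top.ne hA,
    Real.coe_toNNReal _ (normalizedAbs_nonneg _)]

end Determinant

section TrigPolynomial

open MeasureTheory Topology
open scoped AddMonoidAlgebra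

variable {F T Z : Type*} [Field F] [AddCommGroup T] [Module F T] [AddCommGroup Z] [Module F Z]
  (θ : AddChar F Circle) (b : T →ₗ[F] Z →ₗ[F] F)

/-- The trigonometric polynomial `z ↦ ∑ₜ aₜ θ(b(t, z))` on `Z` with coefficients `a ∈ ℂ[T]`. -/
def trigPolynomial : ℂ[T] →ₐ[ℂ] (Z → ℂ) :=
  AddMonoidAlgebra.lift ℂ (Z → ℂ) T
    { toFun := fun t z => θ (b t.toAdd z)
      map_one' := by ext; simp
      map_mul' := fun t t' => by ext; simp [AddChar.map_add_eq_mul] }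

theorem trigPolynomial_single (t : T) (c : ℂ) (z : Z) :
    trigPolynomial θ b (.single t c) z = c * θ (b t z) := by
  simp [trigPolynomial]

variable {θ b}

theorem trigPolynomial_single_sub_mul_single_sub (t : T) (c z : Z) :
    trigPolynomial θ b ((.single t 1 - .single 0 (θ (b t c) : ℂ)) *
        (.single (-t) 1 - .single 0 (θ (-b t c) : ℂ))) z =
      (Complex.normSq ((θ (b t z) : ℂ) - θ (b t c)) : ℂ) := by
  rw [map_mul, Pi.mul_apply, map_sub, map_sub, Pi.sub_apply, Pi.sub_apply]
  simp only [trigPolynomial_single, map_neg, LinearMap.neg_apply, map_zero, LinearMap.zero_apply,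
    AddChar.map_zero_eq_one, Circle.coe_one, AddChar.map_neg_eq_inv, Circle.coe_inv_eq_conj,
    mul_one, one_mul]
  rw [← map_sub, Complex.mul_conj]

theorem exists_addChar_apply_ne_one (hθ : θ ≠ 1) (hb : b.SeparatingRight) {z : Z} (hz : z ≠ 0) :
    ∃ t, θ (b t z) ≠ 1 := by
  obtain ⟨t, ht⟩ : ∃ t, b t z ≠ 0 := by
    by_contra! h
    exact hz (hb z h)
  obtain ⟨a, ha⟩ : ∃ a, θ a ≠ 1 := by
    by_contra! h
    exact hθ (DFunLike.ext _ _ h)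
  exact ⟨(a / b t z) • t, by rwa [map_smul, LinearMap.smul_apply, smul_eq_mul,
    div_mul_cancel₀ _ ht]⟩

variable [TopologicalSpace F] [IsTopologicalRing F] [TopologicalSpace Z] [IsModuleTopology F Z]

theorem isLocallyConstant_addChar_apply (hθ : IsLocallyConstant θ) (t : T) :
    IsLocallyConstant fun z => θ (b t z) :=
  hθ.comp_continuous (IsModuleTopology.continuous_of_linearMap (b t))

theorem continuous_trigPolynomial (hθ : IsLocallyConstant θ) (a : ℂ[T]) :
    Continuous (trigPolynomial θ b a) := by
  induction a using AddMonoidAlgebra.induction_linear with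
  | zero => rw [map_zero]; exact continuous_zero
  | add a a' ha ha' => rw [map_add]; exact ha.add ha'
  | single t c =>
    simp only [funext (trigPolynomial_single θ b t c)]
    exact continuous_const.mul
      (continuous_subtype_val.comp (isLocallyConstant_addChar_apply hθ t).continuous)

/-- Near a point `c ≠ 0` the function `|θ(b(t, z)) - θ(b(t, c))|²` vanishes; finitely many such
factors cover the compact set. -/
theorem exists_trigPolynomial_eq_zero_on (hθ1 : θ ≠ 1) (hθ : IsLocallyConstant θ)
    (hb : b.SeparatingRight) {C : Set Z} (hC : IsCompact C) (h0 : (0 : Z) ∉ C) :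
    ∃ (a : ℂ[T]) (q : Z → ℝ), (∀ z, trigPolynomial θ b a z = q z) ∧ 0 ≤ q ∧ 0 < q 0 ∧
      ∀ z ∈ C, q z = 0 := by
  refine hC.induction_on ⟨1, 1, by simp, zero_le_one, by simp⟩
    (fun s s' hs ⟨a, q, hq⟩ => ⟨a, q, hq.1, hq.2.1, hq.2.2.1, fun z hz => hq.2.2.2 z (hs hz)⟩)
    (fun s s' ⟨a, q, haq, hq, hq0, hqs⟩ ⟨a', q', haq', hq', hq0', hqs'⟩ =>
      ⟨a * a', q * q', fun z => ?_, mul_nonneg hq hq', mul_pos hq0 hq0', ?_⟩)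
    (fun c hc => ?_)
  · rw [map_mul, Pi.mul_apply, haq, haq', Pi.mul_apply, Complex.ofReal_mul]
  · rintro z (hz | hz)
    · rw [Pi.mul_apply, hqs z hz, zero_mul]
    · rw [Pi.mul_apply, hqs' z hz, mul_zero]
  · obtain ⟨t, ht⟩ := exists_addChar_apply_ne_one hθ1 hb (ne_of_mem_of_not_mem hc h0)
    refine ⟨{z | θ (b t z) = θ (b t c)}, mem_nhdsWithin_of_mem_nhds
      ((IsLocallyConstant.iff_eventually_eq _).1 (isLocallyConstant_addChar_apply hθ t) c), _,
      fun z => Complex.normSq ((θ (b t z) : ℂ) - θ (b t c)),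
      trigPolynomial_single_sub_mul_single_sub t c,
      fun z => Complex.normSq_nonneg _, ?_, fun z hz => ?_⟩
    · dsimp only
      rw [map_zero, AddChar.map_zero_eq_one, Complex.normSq_pos, sub_ne_zero]
      exact fun h => ht (Circle.ext h.symm)
    · dsimp only
      rw [show θ (b t z) = θ (b t c) from hz, sub_self, map_zero]

theorem exists_integral_addChar_mul_ne_zero (hθ1 : θ ≠ 1) (hθ : IsLocallyConstant θ)
    (hb : b.SeparatingRight) [MeasurableSpace Z] [BorelSpace Z] (μ : Measure Z)
    [μ.IsOpenPosMeasure] [IsFiniteMeasureOnCompacts μ] {f : Z → ℂ} (hf : IsLocallyConstant f)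
    (hfc : HasCompactSupport f) (hf0 : f 0 ≠ 0) : ∃ t, ∫ z, θ (b t z) * f z ∂μ ≠ 0 := by
  by_contra! h
  have hint (a : ℂ[T]) : Integrable (fun z => trigPolynomial θ b a z * f z) μ :=
    ((continuous_trigPolynomial hθ a).mul hf.continuous).integrable_of_hasCompactSupport
      hfc.mul_left
  have hzero (a : ℂ[T]) : ∫ z, trigPolynomial θ b a z * f z ∂μ = 0 := by
    induction a using AddMonoidAlgebra.induction_linear with
    | zero => simp
    | add a a' ha ha' =>
      simp only [map_add, Pi.add_apply, add_mul]
      rw [integral_add (hint a) (hint a'), ha, ha', add_zero]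
    | single t c =>
      simp only [trigPolynomial_single, mul_assoc]
      rw [integral_const_mul, h t, mul_zero]
  have hUopen : IsOpen {z | f z = f 0} := hf.isOpen_fiber _
  obtain ⟨a, q, haq, hq, hq0, hqC⟩ := exists_trigPolynomial_eq_zero_on hθ1 hθ hb
    (hfc.isCompact.diff hUopen) (fun h => h.2 rfl)
  have hqf (z : Z) : trigPolynomial θ b a z * f z = ((q z * Complex.normSq (f z) : ℝ) : ℂ) *
      (f 0 / Complex.normSq (f 0)) := by
    have h0 : (Complex.normSq (f 0) : ℂ) ≠ 0 :=
      Complex.ofReal_ne_zero.2 (Complex.normSq_pos.2 hf0).ne'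
    rcases eq_or_ne (q z) 0 with hz | hz
    · simp [haq, hz]
    rcases eq_or_ne (f z) 0 with hz' | hz'
    · simp [hz']
    have hfz : f z = f 0 := by
      by_contra hne
      exact hz (hqC z ⟨subset_tsupport _ hz', hne⟩)
    rw [haq, hfz, Complex.ofReal_mul]
    field_simp
  have hqcont : Continuous q := by
    have := Complex.continuous_re.comp (continuous_trigPolynomial (b := b) hθ a)
    simpa only [Function.comp_def, haq, Complex.ofReal_re] using this
  have hpos : 0 < ∫ z, q z * Complex.normSq (f z) ∂μ :=
    (hqcont.mul (Complex.continuous_normSq.comp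
      hf.continuous)).integral_pos_of_hasCompactSupport_nonneg_nonzero (x := 0)
      (hfc.comp_left Complex.normSq_zero).mul_left
      (fun z => mul_nonneg (hq z) (Complex.normSq_nonneg _))
      (mul_pos hq0 (Complex.normSq_pos.2 hf0)).ne'
  have h1 := hzero a
  simp only [hqf] at h1
  rw [integral_mul_const, integral_complex_ofReal, mul_eq_zero] at h1
  rcases h1 with h1 | h1
  · exact hpos.ne' (Complex.ofReal_eq_zero.1 h1)
  · exact div_ne_zero hf0 (Complex.ofReal_ne_zero.2 (Complex.normSq_pos.2 hf0).ne') h1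

end TrigPolynomial

section Polar

open Topology ValuativeRel

variable {F T Z : Type*} [Field F] [ValuativeRel F] [TopologicalSpace F]
  [IsNonarchimedeanLocalField F] [AddCommGroup T] [Module F T] [TopologicalSpace T]
  [IsModuleTopology F T] [AddCommGroup Z] [Module F Z]
  {θ : AddChar F Circle} {b : T →ₗ[F] Z →ₗ[F] F}

theorem exists_valuation_le_of_forall_addChar_eq_one (hθ : θ ≠ 1) {K : Set T} (hK : K ∈ 𝓝 0)
    (e : T) : ∃ γ, ∀ z, (∀ x ∈ K, θ (b x z) = 1) → valuation F (b e z) ≤ γ := by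
  obtain ⟨a, ha⟩ : ∃ a, θ a ≠ 1 := by
    by_contra! h
    exact hθ (DFunLike.ext _ _ h)
  have := IsModuleTopology.toContinuousAdd F T
  have hsmul := (IsModuleTopology.continuous_of_linearMap
    (LinearMap.toSpanSingleton F T e)).tendsto 0
  rw [map_zero] at hsmul
  obtain ⟨γ, hγ, hγK⟩ := (IsValuativeTopology.hasBasis_nhds_zero' F).mem_iff.1 (hsmul hK)
  refine ⟨valuation F a / γ, fun z hz => ?_⟩
  by_contra! hlt
  have hb0 : b e z ≠ 0 := by
    rintro h
    rw [h, map_zero] at hlt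
    exact not_lt_zero hlt
  have hmem : a / b e z ∈ LinearMap.toSpanSingleton F T e ⁻¹' K := by
    refine hγK ?_
    rw [Set.mem_ofPred_eq, map_div₀, div_lt_iff₀ (by simpa [zero_lt_iff] using hb0), mul_comm]
    exact (div_lt_iff₀ (zero_lt_iff.2 hγ)).1 hlt
  refine ha ?_
  rw [← hz _ hmem, LinearMap.toSpanSingleton_apply, map_smul, LinearMap.smul_apply,
    smul_eq_mul, div_mul_cancel₀ _ hb0]

theorem exists_isCompact_of_forall_addChar_eq_one [Module.Finite F T] [TopologicalSpace Z]
    [IsModuleTopology F Z] (hθ : θ ≠ 1) (hb : b.SeparatingRight) {K : Set T} (hK : K ∈ 𝓝 0) :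
    ∃ C : Set Z, IsCompact C ∧ ∀ z, (∀ x ∈ K, θ (b x z) = 1) → z ∈ C := by
  have := IsModuleTopology.toContinuousAdd F Z
  let e := Module.finBasis F T
  choose γ hγ using fun i => exists_valuation_le_of_forall_addChar_eq_one (b := b) hθ hK (e i)
  let Φ : Z →ₗ[F] (Fin (Module.finrank F T) → F) := LinearMap.pi fun i => b (e i)
  obtain ⟨g, hg⟩ := Φ.exists_leftInverse_of_injective <| LinearMap.ker_eq_bot'.2 fun z hz =>
    hb z fun x => LinearMap.congr_fun (e.ext (f₁ := b.flip z) (f₂ := 0) (congrFun hz)) x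
  refine ⟨g '' Set.univ.pi fun i => {x | valuation F x ≤ γ i},
    (isCompact_univ_pi fun i => IsNonarchimedeanLocalField.isCompact_closedBall F _).image
      (IsModuleTopology.continuous_of_linearMap g),
    fun z hz => ⟨Φ z, fun i _ => hγ i z hz, LinearMap.congr_fun hg z⟩⟩

end Polar

section FiniteDimensional

open Topology ValuativeRel

theorem isModuleTopology_submodule {F W : Type*} [Field F] [TopologicalSpace F]
    [AddCommGroup W] [Module F W] [TopologicalSpace W] [IsModuleTopology F W] (L : Submodule F W) :
    IsModuleTopology F L := by
  have := IsModuleTopology.toContinuousAdd F W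
  obtain ⟨p, hp⟩ := L.subtype.exists_leftInverse_of_injective L.ker_subtype
  have : ContinuousAdd L := L.toAddSubmonoid.continuousAdd
  refine ⟨le_antisymm ?_ (moduleTopology_le F L)⟩
  let := moduleTopology F L
  have : IsModuleTopology F L := ⟨rfl⟩
  have := IsModuleTopology.toContinuousAdd F L
  rw [← continuous_id_iff_le]
  convert (IsModuleTopology.continuous_of_linearMap p).comp continuous_subtype_val
  exact (funext fun x => LinearMap.congr_fun hp x).symm

variable (F : Type*) [Field F] [ValuativeRel F] [TopologicalSpace F]
  [IsNonarchimedeanLocalField F]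

variable {F} in
theorem exists_isCompact_isOpen_addSubgroup_field {U : Set F} (hU : U ∈ 𝓝 0) :
    ∃ K : AddSubgroup F, IsCompact (K : Set F) ∧ IsOpen (K : Set F) ∧ (K : Set F) ⊆ U := by
  obtain ⟨γ, hγ, hγU⟩ := (IsValuativeTopology.hasBasis_nhds_zero' F).mem_iff.1 hU
  let K := (valuation F).ltAddSubgroup (Units.mk0 γ hγ)
  have hK : IsOpen (K : Set F) := K.isOpen_of_mem_nhds
    ((IsValuativeTopology.hasBasis_nhds_zero' F).mem_of_mem hγ)
  exact ⟨K, (IsNonarchimedeanLocalField.isCompact_closedBall F γ).of_isClosed_subset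
    (K.isClosed_of_isOpen hK) fun x (hx : valuation F x < γ) => le_of_lt hx, hK, hγU⟩

theorem exists_isCompact_isOpen_addSubgroup {Z : Type*} [AddCommGroup Z] [Module F Z]
    [Module.Finite F Z] [TopologicalSpace Z] [IsModuleTopology F Z] {U : Set Z} (hU : U ∈ 𝓝 0) :
    ∃ K : AddSubgroup Z, IsCompact (K : Set Z) ∧ IsOpen (K : Set Z) ∧ (K : Set Z) ⊆ U := by
  have := IsModuleTopology.toContinuousAdd F Z
  let φ := (Module.finBasis F Z).equivFun
  have hφ : Continuous φ := IsModuleTopology.continuous_of_linearMap φ.toLinearMap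
  have hφ' : Continuous φ.symm := IsModuleTopology.continuous_of_linearMap φ.symm.toLinearMap
  have hU' : φ.symm ⁻¹' U ∈ 𝓝 0 := hφ'.tendsto 0 (by rwa [map_zero])
  rw [nhds_pi, Filter.mem_pi] at hU'
  obtain ⟨I, -, N, hN, hNU⟩ := hU'
  choose K hKc hKo hKN using fun i => exists_isCompact_isOpen_addSubgroup_field (hN i)
  let K' := AddSubgroup.pi Set.univ K
  have hK' : (K' : Set _) = Set.univ.pi fun i => (K i : Set F) := AddSubgroup.coe_pi _ _
  refine ⟨K'.comap φ.toLinearMap.toAddMonoidHom, ?_, ?_, fun z hz => ?_⟩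
  · convert (isCompact_univ_pi hKc).image hφ' using 1
    rw [← hK']
    exact (φ.image_symm_eq_preimage (K' : Set _)).symm
  · exact (hK' ▸ isOpen_set_pi Set.finite_univ fun i _ => hKo i : IsOpen (K' : Set _)).preimage hφ
  · rw [← φ.symm_apply_apply z]
    exact hNU fun i _ => hKN i (hz i trivial)

theorem locallyCompactSpace_of_isModuleTopology (Z : Type*) [AddCommGroup Z] [Module F Z]
    [Module.Finite F Z] [TopologicalSpace Z] [IsModuleTopology F Z] : LocallyCompactSpace Z := by
  have := IsModuleTopology.topologicalAddGroup F Z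
  obtain ⟨K, hKc, hKo, -⟩ := exists_isCompact_isOpen_addSubgroup F (Z := Z) Filter.univ_mem
  exact hKc.locallyCompactSpace_of_mem_nhds_of_addGroup (hKo.mem_nhds K.zero_mem)

end FiniteDimensional

section Isotropic

variable {F W : Type*} [Field F] [NeZero (2 : F)] [AddCommGroup W] [Module F W] [Module.Finite F W]
  {B : W →ₗ[F] W →ₗ[F] F} {L : Submodule F W}

/-- A complement `C` of `L` is made isotropic by shearing it along the map `A : C → L` for which
`B(A c, c') = B(c, c')`. -/
theorem exists_isotropic_isCompl (hB : ∀ w w', B w w' = -B w' w)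
    (hL : ∀ w, w ∈ L ↔ ∀ x ∈ L, B x w = 0) :
    ∃ L' : Submodule F W, IsCompl L L' ∧ ∀ y ∈ L', ∀ y' ∈ L', B y y' = 0 := by
  obtain ⟨C, hC⟩ := L.exists_isCompl
  let β : L →ₗ[F] Module.Dual F C := B.compl₁₂ L.subtype C.subtype
  have hβ : Function.Surjective β := by
    rw [← β.flip_flip, LinearMap.flip_surjective_iff₁, injective_iff_map_eq_zero]
    intro c hc
    have hcL : (c : W) ∈ L := (hL _).2 fun x hx => LinearMap.congr_fun hc ⟨x, hx⟩
    exact Subtype.ext (Submodule.disjoint_def.1 hC.disjoint _ hcL c.2)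
  obtain ⟨σ, hσ⟩ := β.exists_rightInverse_of_surjective (LinearMap.range_eq_top.2 hβ)
  let A : C →ₗ[F] L := σ ∘ₗ B.compl₁₂ C.subtype C.subtype
  have hA (c c' : C) : B (A c) c' = B c c' :=
    LinearMap.congr_fun (LinearMap.congr_fun hσ (B.compl₁₂ C.subtype C.subtype c)) c'
  let s : C →ₗ[F] W := C.subtype - (2⁻¹ : F) • L.subtype ∘ₗ A
  have hs (c : C) : (c : W) = s c + (2⁻¹ : F) • A c := by simp [s]
  refine ⟨LinearMap.range s, ⟨?_, ?_⟩, ?_⟩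
  · rw [Submodule.disjoint_def]
    rintro _ hL' ⟨c, rfl⟩
    have hcL : (c : W) ∈ L := hs c ▸ L.add_mem hL' (L.smul_mem _ (A c).2)
    rw [show c = 0 from Subtype.ext (Submodule.disjoint_def.1 hC.disjoint _ hcL c.2), map_zero]
  · rw [codisjoint_iff, eq_top_iff]
    intro w _
    obtain ⟨x, c, hx, hc, rfl⟩ := Submodule.codisjoint_iff_exists_add_eq.1 hC.codisjoint w
    rw [show c = _ from hs ⟨c, hc⟩, ← add_assoc, add_right_comm]
    exact Submodule.add_mem_sup (L.add_mem hx (L.smul_mem _ (A _).2)) ⟨_, rfl⟩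
  · rintro _ ⟨c, rfl⟩ _ ⟨c', rfl⟩
    have hAA : B (A c) (A c') = 0 := (hL _).1 (A c').2 _ (A c).2
    have hcA : B c (A c') = B c c' := by rw [hB, hA, ← hB]
    simp only [s, LinearMap.sub_apply, LinearMap.smul_apply, LinearMap.comp_apply, map_sub,
      map_smul, Submodule.subtype_apply, smul_eq_mul, hAA, hcA, hA]
    field_simp
    ring

end Isotropic

section WeylSystem

open Topology MeasureTheory
open scoped AddMonoidAlgebra

section Basic

variable {F W S : Type*} [Field F] [TopologicalSpace F] [AddCommGroup W] [Module F W]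
  [TopologicalSpace W] [AddCommGroup S] [Module ℂ S]

/-- The operators `ρ w`, `w ∈ W`, form a smooth irreducible Weyl system on `S`: together with the
scalars `ψ t` they are an irreducible representation of the Heisenberg group of `(W, B)`. -/
structure IsWeylSystem (ψ : AddChar F Circle) (B : W →ₗ[F] W →ₗ[F] F) (ρ : W → Module.End ℂ S) :
    Prop where
  ne_one : ψ ≠ 1
  isLocallyConstant : IsLocallyConstant ψ
  skew : ∀ w w', B w w' = -B w' w
  nontrivial : Nontrivial S
  map_zero : ρ 0 = 1
  map_mul : ∀ w w' φ, ρ w (ρ w' φ) = (ψ (B w w') : ℂ) • ρ (w + w') φ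
  irreducible : ∀ N : Submodule ℂ S, (∀ w, ∀ φ ∈ N, ρ w φ ∈ N) → N = ⊥ ∨ N = ⊤
  smooth : ∀ φ, {w | ρ w φ = φ} ∈ 𝓝 (0 : W)

/-- The functional `l` is invariant under the operators `ρ w` with `w ∈ L`. -/
def IsInvariantUnder (ρ : W → Module.End ℂ S) (L : Submodule F W) (l : Module.Dual ℂ S) : Prop :=
  ∀ w ∈ L, ∀ φ, l (ρ w φ) = l φ

variable {ψ : AddChar F Circle} {B : W →ₗ[F] W →ₗ[F] F} {ρ : W → Module.End ℂ S}
  {l : Module.Dual ℂ S}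

namespace IsWeylSystem

theorem mul_self_ne_one [NeZero (2 : F)] (hρ : IsWeylSystem ψ B ρ) : ψ * ψ ≠ 1 := by
  refine fun h => hρ.ne_one (DFunLike.ext _ _ fun t => ?_)
  rw [← add_halves t, AddChar.map_add_eq_mul, ← AddChar.mul_apply, h]
  rfl

theorem isLocallyConstant_mul_self (hρ : IsWeylSystem ψ B ρ) : IsLocallyConstant (ψ * ψ) :=
  hρ.isLocallyConstant.mul hρ.isLocallyConstant

theorem comm (hρ : IsWeylSystem ψ B ρ) (w w' : W) (φ : S) :
    ρ w (ρ w' φ) = ((ψ * ψ) (B w w') : ℂ) • ρ w' (ρ w φ) := by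
  rw [hρ.map_mul, hρ.map_mul, hρ.skew w' w, smul_smul, add_comm w' w, AddChar.mul_apply,
    AddChar.map_neg_eq_inv, ← Circle.coe_mul, mul_inv_cancel_right]

theorem mul_of_orthogonal (hρ : IsWeylSystem ψ B ρ) {w w' : W} (h : B w w' = 0) (φ : S) :
    ρ w (ρ w' φ) = ρ (w + w') φ := by
  rw [hρ.map_mul, h, AddChar.map_zero_eq_one, Circle.coe_one, one_smul]

theorem conj [NeZero (2 : F)] (hρ : IsWeylSystem ψ B ρ) (w w' : W) (φ : S) :
    ρ (-w) (ρ w' (ρ w φ)) = ((ψ * ψ) (B w' w) : ℂ) • ρ w' φ := by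
  have hww : B (-w) w = 0 := by
    have h2 : (2 : F) * B w w = 0 := by linear_combination hρ.skew w w
    rw [_root_.map_neg, LinearMap.neg_apply, (mul_eq_zero.1 h2).resolve_left two_ne_zero, neg_zero]
  rw [hρ.comm w' w, map_smul, hρ.mul_of_orthogonal hww, neg_add_cancel, hρ.map_zero,
    Module.End.one_apply]

theorem eq_zero_of_forall (hρ : IsWeylSystem ψ B ρ) (hl : l ≠ 0) {φ : S}
    (h : ∀ w, l (ρ w φ) = 0) : φ = 0 := by
  let N : Submodule ℂ S := ⨅ w, LinearMap.ker (l ∘ₗ ρ w)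
  have hN (φ : S) : φ ∈ N ↔ ∀ w, l (ρ w φ) = 0 := by simp [N, Submodule.mem_iInf]
  rcases hρ.irreducible N fun w φ hφ => (hN _).2 fun w' => by
    rw [hρ.map_mul, map_smul, (hN φ).1 hφ, smul_zero] with h0 | h0
  · exact (Submodule.eq_bot_iff N).1 h0 φ ((hN φ).2 h)
  · refine absurd (LinearMap.ext fun φ' => ?_) hl
    have := (hN φ').1 (h0 ▸ Submodule.mem_top) 0
    rwa [hρ.map_zero] at this

theorem apply_eq_of_sub_mem {L : Submodule F W} (hρ : IsWeylSystem ψ B ρ)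
    (hl : IsInvariantUnder ρ L l) {w w' : W} (hB : B (w - w') w' = 0) (h : w - w' ∈ L) (φ : S) :
    l (ρ w φ) = l (ρ w' φ) := by
  rw [← sub_add_cancel w w', ← hρ.mul_of_orthogonal hB, hl _ h]

theorem separatingRight_of_sub_mem {L M : Submodule F W} (hρ : IsWeylSystem ψ B ρ)
    (hL : ∀ w, w ∈ L ↔ ∀ x ∈ L, B x w = 0) {j : M ⧸ L.submoduleOf M →ₗ[F] W}
    (hj : ∀ x : M, j ((L.submoduleOf M).mkQ x) - x ∈ L) :
    (B.flip.compl₁₂ L.subtype j).SeparatingRight := fun q hq => by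
  obtain ⟨x, rfl⟩ := (L.submoduleOf M).mkQ_surjective q
  have hjL : j ((L.submoduleOf M).mkQ x) ∈ L := (hL _).2 fun y hy => by
    rw [hρ.skew]
    exact neg_eq_zero.2 (hq ⟨y, hy⟩)
  exact (Submodule.Quotient.mk_eq_zero _).2 ((L.sub_mem_iff_right hjL).1 (hj x))

end IsWeylSystem

end Basic

section IntegralFunctional

variable {W Z S : Type*} [MeasurableSpace Z] [AddCommGroup S] [Module ℂ S]
  {ρ : W → Module.End ℂ S} {l : Module.Dual ℂ S}

/-- The functional `φ ↦ ∫ l(ρ(j z) φ) dμ(z)` obtained from `l` by averaging along `j`. -/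
def integralFunctional (μ : Measure Z) (j : Z → W)
    (ρ : W → Module.End ℂ S) (l : Module.Dual ℂ S)
    (hint : ∀ φ, Integrable (fun z => l (ρ (j z) φ)) μ) : Module.Dual ℂ S where
  toFun φ := ∫ z, l (ρ (j z) φ) ∂μ
  map_add' φ φ' := by
    simp only [map_add]
    exact integral_add (hint φ) (hint φ')
  map_smul' c φ := by
    simp only [map_smul]
    exact integral_smul _ _

theorem integralFunctional_apply {μ : Measure Z} {j : Z → W}
    (hint : ∀ φ, Integrable (fun z => l (ρ (j z) φ)) μ) (φ : S) :
    integralFunctional μ j ρ l hint φ = ∫ z, l (ρ (j z) φ) ∂μ := rfl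

theorem integralFunctional_apply_translate [AddGroup Z] [MeasurableAdd Z] {μ : Measure Z}
    {j : Z → W} (hint : ∀ φ, Integrable (fun z => l (ρ (j z) φ)) μ) {w : W} {z₀ : Z}
    (hμ : MeasurePreserving (· + z₀) μ μ)
    (h : ∀ z φ, l (ρ (j z) (ρ w φ)) = l (ρ (j (z + z₀)) φ)) (φ : S) :
    integralFunctional μ j ρ l hint (ρ w φ) = integralFunctional μ j ρ l hint φ := by
  simp only [integralFunctional_apply, h]
  exact hμ.integral_comp (measurableEmbedding_addRight z₀) fun z => l (ρ (j z) φ)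

end IntegralFunctional

section Coefficients

variable {F W S T Z : Type*} [Field F] [TopologicalSpace F] [AddCommGroup W]
  [Module F W] [TopologicalSpace W] [AddCommGroup S] [Module ℂ S] [AddCommGroup T] [Module F T]
  [AddCommGroup Z] [Module F Z]
  {B : W →ₗ[F] W →ₗ[F] F} {ρ : W → Module.End ℂ S} {l : Module.Dual ℂ S}
  {i : T →ₗ[F] W} {j : Z →ₗ[F] W} {ψ : AddChar F Circle}

namespace IsWeylSystem

theorem exists_apply_eq_trigPolynomial_mul (hρ : IsWeylSystem ψ B ρ) (φ : S) (a : ℂ[T]) :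
    ∃ φ', ∀ l : Module.Dual ℂ S, (∀ t φ, l (ρ (i t) φ) = l φ) → ∀ z : Z,
      l (ρ (j z) φ') = trigPolynomial (ψ * ψ) (B.flip.compl₁₂ i j) a z * l (ρ (j z) φ) := by
  induction a using AddMonoidAlgebra.induction_linear with
  | zero => exact ⟨0, by simp⟩
  | add a a' ha ha' =>
    obtain ⟨φ₁, h₁⟩ := ha
    obtain ⟨φ₂, h₂⟩ := ha'
    refine ⟨φ₁ + φ₂, fun l hl z => ?_⟩
    rw [_root_.map_add, _root_.map_add, h₁ l hl, h₂ l hl, _root_.map_add, Pi.add_apply, add_mul]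
  | single t c =>
    refine ⟨c • ρ (i t) φ, fun l hl z => ?_⟩
    rw [trigPolynomial_single, map_smul, map_smul, hρ.comm, map_smul, hl, smul_eq_mul,
      smul_eq_mul, mul_assoc]
    rfl

theorem isLocallyConstant_matrixCoeff [IsModuleTopology F W]
    [TopologicalSpace Z] [IsModuleTopology F Z] (hρ : IsWeylSystem ψ B ρ)
    (hj : ∀ z z', B (j z) (j z') = 0) (l : Module.Dual ℂ S) (φ : S) :
    IsLocallyConstant fun z => l (ρ (j z) φ) := by
  have := IsModuleTopology.topologicalAddGroup F Z
  have := IsModuleTopology.toContinuousAdd F W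
  rw [IsLocallyConstant.iff_eventually_eq]
  intro z
  have hsub : Filter.Tendsto (fun z' => j (z' - z)) (𝓝 z) (𝓝 0) := by
    simpa [Function.comp_def] using ((IsModuleTopology.continuous_of_linearMap j).comp
      (continuous_sub_right z)).tendsto z
  filter_upwards [hsub (hρ.smooth φ)] with z' hz'
  have := hρ.mul_of_orthogonal (hj z (z' - z)) φ
  rw [show ρ (j (z' - z)) φ = φ from hz', ← _root_.map_add, add_sub_cancel] at this
  rw [this]

theorem exists_integral_conj_ne_zero [NeZero (2 : F)] [IsTopologicalRing F] [TopologicalSpace Z]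
    [IsModuleTopology F Z] [MeasurableSpace Z] [BorelSpace Z] (μ : Measure Z)
    [IsFiniteMeasureOnCompacts μ] [μ.IsOpenPosMeasure] (hρ : IsWeylSystem ψ B ρ)
    (hb : (B.flip.compl₁₂ i j).SeparatingRight) {φ : S}
    (hf : IsLocallyConstant fun z => l (ρ (j z) φ))
    (hfc : HasCompactSupport fun z => l (ρ (j z) φ)) (hφ : l φ ≠ 0) :
    ∃ t, ∫ z, l (ρ (-i t) (ρ (j z) (ρ (i t) φ))) ∂μ ≠ 0 := by
  obtain ⟨t, ht⟩ := exists_integral_addChar_mul_ne_zero hρ.mul_self_ne_one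
    hρ.isLocallyConstant_mul_self hb μ hf hfc (by rwa [_root_.map_zero, hρ.map_zero])
  refine ⟨t, ?_⟩
  simp only [hρ.conj, map_smul, smul_eq_mul]
  exact ht

theorem hasCompactSupport_matrixCoeff [NeZero (2 : F)] [ValuativeRel F]
    [IsNonarchimedeanLocalField F] [IsModuleTopology F W] [TopologicalSpace Z]
    [IsModuleTopology F Z] [TopologicalSpace T] [IsModuleTopology F T] [Module.Finite F T]
    (hρ : IsWeylSystem ψ B ρ)
    (hb : (B.flip.compl₁₂ i j).SeparatingRight) {K : Set T} (hK : K ∈ 𝓝 0)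
    (hl : ∀ t ∈ K, ∀ φ, l (ρ (i t) φ) = l φ) (φ : S) :
    HasCompactSupport fun z => l (ρ (j z) φ) := by
  have := IsModuleTopology.topologicalAddGroup F Z
  have := IsModuleTopology.toContinuousAdd F W
  have hφ : {t | ρ (i t) φ = φ} ∈ 𝓝 0 :=
    (IsModuleTopology.continuous_of_linearMap i).tendsto 0 (by
      rw [_root_.map_zero]
      exact hρ.smooth φ)
  obtain ⟨C, hC, hCz⟩ := exists_isCompact_of_forall_addChar_eq_one hρ.mul_self_ne_one hb
    (Filter.inter_mem hK hφ)
  refine HasCompactSupport.intro hC fun z hz => ?_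
  by_contra hne
  refine hz (hCz z fun t ⟨htK, ht⟩ => Circle.ext ?_)
  have := congrArg l (hρ.comm (j z) (i t) φ)
  rw [show ρ (i t) φ = φ from ht, map_smul, hl t htK, smul_eq_mul] at this
  exact (mul_eq_right₀ hne).1 this.symm

end IsWeylSystem

end Coefficients

end WeylSystem

section InvariantFunctional

open Topology MeasureTheory

section Existence

variable {F W S : Type*} [Field F] [ValuativeRel F] [TopologicalSpace F]
  [IsNonarchimedeanLocalField F] [AddCommGroup W] [Module F W] [TopologicalSpace W]
  [IsModuleTopology F W] [AddCommGroup S] [Module ℂ S]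
  {ψ : AddChar F Circle} {B : W →ₗ[F] W →ₗ[F] F} {ρ : W → Module.End ℂ S}

theorem IsWeylSystem.exists_isInvariant_nhds {Z : Type*} [AddCommGroup Z] [Module F Z]
    [Module.Finite F Z] [TopologicalSpace Z] [IsModuleTopology F Z] {j : Z →ₗ[F] W}
    (hρ : IsWeylSystem ψ B ρ) (hj : ∀ z z', B (j z) (j z') = 0) :
    ∃ (l : Module.Dual ℂ S) (φ : S) (K : Set Z), l φ ≠ 0 ∧ K ∈ 𝓝 0 ∧
      ∀ z ∈ K, ∀ φ, l (ρ (j z) φ) = l φ := by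
  have := IsModuleTopology.toContinuousAdd F W
  have := IsModuleTopology.topologicalAddGroup F Z
  have := locallyCompactSpace_of_isModuleTopology F Z
  have := hρ.nontrivial
  borelize Z
  obtain ⟨φ, hφ⟩ := exists_ne (0 : S)
  obtain ⟨l₀, hl₀⟩ := Module.Projective.exists_dual_ne_zero ℂ hφ
  obtain ⟨K, hKc, hKo, hKφ⟩ := exists_isCompact_isOpen_addSubgroup F
    ((IsModuleTopology.continuous_of_linearMap j).tendsto 0
      (by rw [_root_.map_zero]; exact hρ.smooth φ))
  let μ : Measure Z := Measure.addHaar.restrict K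
  have hint (φ : S) : Integrable (fun z => l₀ (ρ (j z) φ)) μ :=
    (hρ.isLocallyConstant_matrixCoeff hj l₀ φ).continuous.continuousOn.integrableOn_compact' hKc
      hKo.measurableSet
  refine ⟨integralFunctional μ j ρ l₀ hint, φ, K, ?_, hKo.mem_nhds K.zero_mem, fun z₀ hz₀ φ => ?_⟩
  · rw [integralFunctional_apply, setIntegral_congr_fun hKo.measurableSet
      (g := fun _ => l₀ φ) fun z hz => congrArg l₀ (hKφ hz), setIntegral_const]
    refine smul_ne_zero ?_ hl₀
    exact ENNReal.toReal_ne_zero.2 ⟨(hKo.measure_pos _ ⟨0, K.zero_mem⟩).ne', hKc.measure_ne_top⟩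
  · refine integralFunctional_apply_translate hint ?_
      (fun z φ => by rw [hρ.mul_of_orthogonal (hj z z₀), _root_.map_add]) φ
    have h := (measurePreserving_add_right (Measure.addHaar : Measure Z) z₀).restrict_preimage
      hKo.measurableSet
    rwa [show (· + z₀) ⁻¹' (K : Set Z) = K from Set.ext fun z => K.add_mem_cancel_right hz₀] at h

end Existence

variable {F W S : Type*} [Field F] [NeZero (2 : F)] [ValuativeRel F] [TopologicalSpace F]
  [IsNonarchimedeanLocalField F] [AddCommGroup W] [Module F W] [Module.Finite F W]
  [TopologicalSpace W] [IsModuleTopology F W] [AddCommGroup S] [Module ℂ S]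
  {ψ : AddChar F Circle} {B : W →ₗ[F] W →ₗ[F] F} {ρ : W → Module.End ℂ S} {L : Submodule F W}

namespace IsWeylSystem

theorem ker_le_ker (hρ : IsWeylSystem ψ B ρ) (hL : ∀ w, w ∈ L ↔ ∀ x ∈ L, B x w = 0)
    {l l' : Module.Dual ℂ S} (hl0 : l ≠ 0) (hl : IsInvariantUnder ρ L l)
    (hl' : IsInvariantUnder ρ L l') : LinearMap.ker l ≤ LinearMap.ker l' := by
  intro φ hφ
  obtain ⟨L', hLL', hL'⟩ := exists_isotropic_isCompl hρ.skew hL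
  have := isModuleTopology_submodule L
  have := isModuleTopology_submodule L'
  have hb : (B.flip.compl₁₂ L.subtype L'.subtype).SeparatingRight := fun y hy =>
    Subtype.ext <| Submodule.disjoint_def.1 hLL'.disjoint _
      ((hL _).2 fun x hx => by rw [hρ.skew]; exact neg_eq_zero.2 (hy ⟨x, hx⟩)) y.2
  have hf : IsLocallyConstant fun y : L' => l (ρ y φ) :=
    hρ.isLocallyConstant_matrixCoeff (j := L'.subtype) (fun y y' => hL' y y.2 y' y'.2) l φ
  have hfc : HasCompactSupport fun y : L' => l (ρ y φ) := hρ.hasCompactSupport_matrixCoeff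
    (i := L.subtype) (j := L'.subtype) hb Filter.univ_mem (fun t _ => hl t t.2) φ
  have h0 : (0 : L') ∉ tsupport fun y : L' => l (ρ y φ) := by
    have hclosed : IsClosed (Function.support fun y : L' => l (ρ y φ)) :=
      (hf.isOpen_fiber 0).isClosed_compl
    rw [tsupport, hclosed.closure_eq]
    simpa [hρ.map_zero] using hφ
  obtain ⟨a, q, haq, -, hq0, hqf⟩ :=
    exists_trigPolynomial_eq_zero_on hρ.mul_self_ne_one hρ.isLocallyConstant_mul_self hb hfc h0
  obtain ⟨φ', hφ'⟩ :=
    hρ.exists_apply_eq_trigPolynomial_mul (i := L.subtype) (j := L'.subtype) φ a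
  have hL'φ' (y : L') : l (ρ y φ') = 0 := by
    refine (hφ' l (fun x => hl x x.2) y).trans ?_
    rw [haq]
    by_cases hy : y ∈ tsupport fun y : L' => l (ρ y φ)
    · rw [hqf y hy, Complex.ofReal_zero, zero_mul]
    · exact mul_eq_zero_of_right _
        (image_eq_zero_of_notMem_tsupport (f := fun y : L' => l (ρ y φ)) hy)
  have hφ'0 : φ' = 0 := hρ.eq_zero_of_forall hl0 fun w => by
    obtain ⟨x, y, hx, hy, rfl⟩ := Submodule.codisjoint_iff_exists_add_eq.1 hLL'.codisjoint w
    have := hl x hx (ρ y φ')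
    rw [hρ.map_mul, map_smul, hL'φ' ⟨y, hy⟩, smul_eq_mul] at this
    exact (mul_eq_zero.1 this).resolve_left (Circle.coe_ne_zero _)
  have := hφ' l' (fun x => hl' x x.2) 0
  rw [hφ'0, _root_.map_zero, _root_.map_zero, haq, _root_.map_zero, hρ.map_zero, eq_comm,
    mul_eq_zero] at this
  exact this.resolve_left (Complex.ofReal_ne_zero.2 hq0.ne')

theorem exists_eq_smul (hρ : IsWeylSystem ψ B ρ) (hL : ∀ w, w ∈ L ↔ ∀ x ∈ L, B x w = 0)
    {l l' : Module.Dual ℂ S} (hl0 : l ≠ 0) (hl : IsInvariantUnder ρ L l)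
    (hl' : IsInvariantUnder ρ L l') : ∃ c : ℂ, l' = c • l := by
  have := mem_span_of_iInf_ker_le_ker (ι := Unit) (L := fun _ => l) (K := l')
    (by simpa using hρ.ker_le_ker hL hl0 hl hl')
  rw [Set.range_const, Submodule.mem_span_singleton] at this
  exact this.imp fun c hc => hc.symm

theorem exists_isInvariantUnder (hρ : IsWeylSystem ψ B ρ) (hB : B.SeparatingLeft)
    (hL : ∀ w, w ∈ L ↔ ∀ x ∈ L, B x w = 0) :
    ∃ l : Module.Dual ℂ S, l ≠ 0 ∧ IsInvariantUnder ρ L l := by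
  obtain ⟨L', hLL', hL'⟩ := exists_isotropic_isCompl hρ.skew hL
  have := isModuleTopology_submodule L
  have := isModuleTopology_submodule L'
  have := locallyCompactSpace_of_isModuleTopology F ↥L
  have := IsModuleTopology.topologicalAddGroup F ↥L
  borelize ↥L
  have hLL (x x' : L) : B x x' = 0 := (hL _).1 x'.2 _ x.2
  have hb : (B.flip.compl₁₂ L'.subtype L.subtype).SeparatingRight := fun x hx =>
    Subtype.ext <| hB _ fun w => by
      obtain ⟨x', y, hx', hy, rfl⟩ := Submodule.codisjoint_iff_exists_add_eq.1 hLL'.codisjoint w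
      rw [_root_.map_add, hLL x ⟨x', hx'⟩, zero_add]
      exact hx ⟨y, hy⟩
  obtain ⟨l₀, φ, K, hl₀, hK, hKl₀⟩ := hρ.exists_isInvariant_nhds (j := L'.subtype)
    fun y y' => hL' y y.2 y' y'.2
  have hconst (l : Module.Dual ℂ S) (φ : S) : IsLocallyConstant fun x : L => l (ρ x φ) :=
    hρ.isLocallyConstant_matrixCoeff (j := L.subtype) hLL l φ
  have hcpt {l : Module.Dual ℂ S} (hl : ∀ y ∈ K, ∀ φ, l (ρ y φ) = l φ) (φ : S) :
      HasCompactSupport fun x : L => l (ρ x φ) :=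
    hρ.hasCompactSupport_matrixCoeff (i := L'.subtype) (j := L.subtype) hb hK hl φ
  obtain ⟨y, hy⟩ := hρ.exists_integral_conj_ne_zero (i := L'.subtype) (j := L.subtype)
    Measure.addHaar hb (hconst l₀ φ) (hcpt hKl₀ φ) hl₀
  have hK' : ∀ y' ∈ K, ∀ φ, (l₀ ∘ₗ ρ (-y)) (ρ y' φ) = (l₀ ∘ₗ ρ (-y)) φ := fun y' hy' φ => by
    have h0 : B (-(y : W)) y' = 0 := hL' _ (L'.neg_mem y.2) _ y'.2
    rw [LinearMap.comp_apply, hρ.comm, h0, AddChar.map_zero_eq_one, Circle.coe_one, one_smul]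
    exact hKl₀ y' hy' _
  have hint (φ : S) : Integrable (fun x : L => (l₀ ∘ₗ ρ (-y)) (ρ x φ)) Measure.addHaar :=
    (hconst _ φ).continuous.integrable_of_hasCompactSupport (hcpt hK' φ)
  refine ⟨integralFunctional Measure.addHaar Subtype.val ρ _ hint,
    fun h => hy (LinearMap.congr_fun h _), fun x hx => ?_⟩
  exact integralFunctional_apply_translate hint (measurePreserving_add_right _ (⟨x, hx⟩ : L))
    fun x' φ => by rw [hρ.mul_of_orthogonal (hLL x' ⟨x, hx⟩), Submodule.coe_add]

end IsWeylSystem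

end InvariantFunctional

section Ratio

open Topology MeasureTheory

section Determinant

variable {F W : Type*} [Field F] [AddCommGroup W] [Module F W] {L M : Submodule F W}

theorem exists_section_mkQ_submoduleOf (L M : Submodule F W) :
    ∃ j : M ⧸ L.submoduleOf M →ₗ[F] W, (∀ q, j q ∈ M) ∧
      ∀ x : M, j ((L.submoduleOf M).mkQ x) - x ∈ L := by
  obtain ⟨σ, hσ⟩ := (L.submoduleOf M).mkQ.exists_rightInverse_of_surjective
    (Submodule.range_mkQ _)
  have hmk (x : M) : (L.submoduleOf M).mkQ (σ ((L.submoduleOf M).mkQ x)) =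
      (L.submoduleOf M).mkQ x := LinearMap.congr_fun hσ _
  exact ⟨M.subtype ∘ₗ σ, fun q => (σ q).2, fun x =>
    (Submodule.Quotient.eq (L.submoduleOf M)).1 (hmk x)⟩

variable (h : W ≃ₗ[F] W)

theorem submoduleOf_le_comap_restrict (hL : ∀ w ∈ L, h w ∈ L) (hM : ∀ w ∈ M, h w ∈ M) :
    L.submoduleOf M ≤ (L.submoduleOf M).comap (h.toLinearMap.restrict hM) :=
  fun w hw => hL w hw

variable [Module.Finite F W]

theorem det_restrict_ne_zero (hL : ∀ w ∈ L, h w ∈ L) :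
    LinearMap.det (h.toLinearMap.restrict hL) ≠ 0 := by
  have hinj : Function.Injective (h.toLinearMap.restrict hL) := fun x y hxy =>
    Subtype.ext (h.injective (congrArg Subtype.val hxy))
  exact (LinearEquiv.isUnit_det' (LinearEquiv.ofInjectiveEndo _ hinj)).ne_zero

theorem det_restrict_inf_mul_det_mapQ (hL : ∀ w ∈ L, h w ∈ L) (hM : ∀ w ∈ M, h w ∈ M) :
    LinearMap.det (h.toLinearMap.restrict (p := M ⊓ L) (q := M ⊓ L)
        fun w hw => ⟨hM w hw.1, hL w hw.2⟩) *
      LinearMap.det ((L.submoduleOf M).mapQ _ _ (submoduleOf_le_comap_restrict h hL hM)) =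
    LinearMap.det (h.toLinearMap.restrict hM) := by
  rw [LinearMap.det_eq_det_mul_det (L.submoduleOf M) (h.toLinearMap.restrict hM)
    (submoduleOf_le_comap_restrict h hL hM)]
  congr 1
  let e : L.submoduleOf M ≃ₗ[F] (M ⊓ L : Submodule F W) :=
    (M.equivSubtypeMap (L.submoduleOf M)).trans
      (LinearEquiv.ofEq _ _ (Submodule.map_comap_subtype M L))
  rw [← LinearMap.det_conj _ e]
  rfl

end Determinant

theorem integral_eq_normalizedAbs_det_mul {F Z : Type*} [Field F] [ValuativeRel F]
    [TopologicalSpace F] [IsNonarchimedeanLocalField F] [AddCommGroup Z] [Module F Z]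
    [Module.Finite F Z] [TopologicalSpace Z] [IsModuleTopology F Z] [MeasurableSpace Z]
    [BorelSpace Z] (μ : Measure Z) [μ.IsAddHaarMeasure] (k : Z ≃ₗ[F] Z) (f : Z → ℂ) :
    ∫ z, f z ∂μ = normalizedAbs (LinearMap.det k.toLinearMap) * ∫ z, f (k z) ∂μ := by
  have := IsModuleTopology.topologicalAddGroup F Z
  have hmap : μ.map k.symm = ENNReal.ofReal (normalizedAbs (LinearMap.det k.toLinearMap)) • μ := by
    ext A hA
    have hk : Measurable k.symm :=
      (IsModuleTopology.continuous_of_linearMap k.symm.toLinearMap).measurable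
    rw [Measure.map_apply hk hA, Measure.smul_apply, smul_eq_mul, ← addHaar_image_linearEquiv μ k A]
    exact congrArg μ (k.toEquiv.image_eq_preimage_symm A).symm
  let e : Z ≃ₜ Z :=
    { k.symm.toEquiv with
      continuous_toFun := IsModuleTopology.continuous_of_linearMap k.symm.toLinearMap
      continuous_invFun := IsModuleTopology.continuous_of_linearMap k.toLinearMap }
  have h := (e.measurableEmbedding.integral_map (μ := μ) fun z => f (k z)).symm
  rw [show ⇑e = k.symm from rfl, hmap, integral_smul_measure,
    ENNReal.toReal_ofReal (normalizedAbs_nonneg _), Complex.real_smul] at h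
  simpa only [LinearEquiv.apply_symm_apply] using h

theorem integralFunctional_apply_eq_normalizedAbs_det_mul {F W Z S : Type*} [Field F]
    [ValuativeRel F] [TopologicalSpace F] [IsNonarchimedeanLocalField F] [AddCommGroup Z]
    [Module F Z] [Module.Finite F Z] [TopologicalSpace Z] [IsModuleTopology F Z]
    [MeasurableSpace Z] [BorelSpace Z] [AddCommGroup S] [Module ℂ S] {μ : Measure Z}
    [μ.IsAddHaarMeasure] {j : Z → W} {ρ : W → Module.End ℂ S} {l : Module.Dual ℂ S}
    (hint : ∀ φ, Integrable (fun z => l (ρ (j z) φ)) μ) {k : Z →ₗ[F] Z} (hk : LinearMap.det k ≠ 0)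
    {a : ℂ} {φ φ' : S} (h : ∀ z, l (ρ (j (k z)) φ') = a * l (ρ (j z) φ)) :
    integralFunctional μ j ρ l hint φ' =
      a * normalizedAbs (LinearMap.det k) * integralFunctional μ j ρ l hint φ := by
  rw [integralFunctional_apply, integralFunctional_apply,
    integral_eq_normalizedAbs_det_mul μ (LinearMap.equivOfDetNeZero k hk)]
  change normalizedAbs (LinearMap.det k) * ∫ z, l (ρ (j (k z)) φ') ∂μ = _
  simp only [h, integral_const_mul]
  ring

variable {F W S : Type*} [Field F] [NeZero (2 : F)] [ValuativeRel F] [TopologicalSpace F]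
  [IsNonarchimedeanLocalField F] [AddCommGroup W] [Module F W] [Module.Finite F W]
  [TopologicalSpace W] [IsModuleTopology F W] [AddCommGroup S] [Module ℂ S]
  {ψ : AddChar F Circle} {B : W →ₗ[F] W →ₗ[F] F} {ρ : W → Module.End ℂ S} {L M : Submodule F W}
  {l m : Module.Dual ℂ S} {P : Module.End ℂ S} {h : W ≃ₗ[F] W}

namespace IsWeylSystem

theorem exists_isInvariantUnder_apply_eq_mul (hρ : IsWeylSystem ψ B ρ)
    (hL : ∀ w, w ∈ L ↔ ∀ x ∈ L, B x w = 0) (hM : ∀ w ∈ M, ∀ w' ∈ M, B w w' = 0)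
    (hl0 : l ≠ 0) (hl : IsInvariantUnder ρ L l) (hP : ∀ w φ, P (ρ w φ) = ρ (h w) (P φ))
    (hhL : ∀ w ∈ L, h w ∈ L) (hhM : ∀ w ∈ M, h w ∈ M) {a : ℂ} (ha : ∀ φ, l (P φ) = a * l φ) :
    ∃ m : Module.Dual ℂ S, m ≠ 0 ∧ IsInvariantUnder ρ M m ∧ ∀ φ, m (P φ) = a *
      normalizedAbs (LinearMap.det
        ((L.submoduleOf M).mapQ _ _ (submoduleOf_le_comap_restrict h hhL hhM))) * m φ := by
  obtain ⟨j, hjM, hj⟩ := exists_section_mkQ_submoduleOf L M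
  set π := (L.submoduleOf M).mkQ
  have := isModuleTopology_submodule L
  have := isModuleTopology_submodule M
  have := IsModuleTopology.topologicalAddGroup F (M ⧸ L.submoduleOf M)
  have := locallyCompactSpace_of_isModuleTopology F (M ⧸ L.submoduleOf M)
  borelize (M ⧸ L.submoduleOf M)
  have hlj (x : M) (φ : S) : l (ρ (j (π x)) φ) = l (ρ x φ) :=
    hρ.apply_eq_of_sub_mem hl (hM _ (M.sub_mem (hjM _) x.2) _ x.2) (hj x) φ
  have hb := hρ.separatingRight_of_sub_mem hL hj
  have hconst (φ : S) : IsLocallyConstant fun q => l (ρ (j q) φ) :=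
    hρ.isLocallyConstant_matrixCoeff (fun q q' => hM _ (hjM q) _ (hjM q')) l φ
  have hcpt (φ : S) : HasCompactSupport fun q => l (ρ (j q) φ) :=
    hρ.hasCompactSupport_matrixCoeff hb Filter.univ_mem (fun t _ => hl t t.2) φ
  have hint (φ : S) : Integrable (fun q => l (ρ (j q) φ)) Measure.addHaar :=
    (hconst φ).continuous.integrable_of_hasCompactSupport (hcpt φ)
  refine ⟨integralFunctional Measure.addHaar j ρ l hint, fun h0 => ?_, fun w hw => ?_,
    fun φ => ?_⟩
  · obtain ⟨φ, hφ⟩ := DFunLike.ne_iff.1 hl0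
    obtain ⟨t, ht⟩ := hρ.exists_integral_conj_ne_zero Measure.addHaar hb (hconst φ) (hcpt φ) hφ
    refine ht ?_
    simp only [hl _ (L.neg_mem t.2), Submodule.subtype_apply]
    exact LinearMap.congr_fun h0 _
  · refine integralFunctional_apply_translate hint (measurePreserving_add_right _ (π ⟨w, hw⟩)) ?_
    intro q φ
    obtain ⟨x, rfl⟩ := (L.submoduleOf M).mkQ_surjective q
    rw [hlj, hρ.mul_of_orthogonal (hM _ x.2 _ hw), ← _root_.map_add, hlj]
    rfl
  · set k := (L.submoduleOf M).mapQ _ _ (submoduleOf_le_comap_restrict h hhL hhM)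
    have hk : LinearMap.det k ≠ 0 := fun hk => det_restrict_ne_zero h hhM <| by
      rw [← det_restrict_inf_mul_det_mapQ h hhL hhM, hk, mul_zero]
    have hPk (q : M ⧸ L.submoduleOf M) : l (ρ (j (k q)) (P φ)) = a * l (ρ (j q) φ) := by
      obtain ⟨x, rfl⟩ := (L.submoduleOf M).mkQ_surjective q
      rw [hlj x, ← ha, hP]
      exact hlj (h.toLinearMap.restrict hhM x) (P φ)
    exact integralFunctional_apply_eq_normalizedAbs_det_mul hint hk hPk

theorem mul_normalizedAbs_det_restrict_inf (hρ : IsWeylSystem ψ B ρ)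
    (hL : ∀ w, w ∈ L ↔ ∀ x ∈ L, B x w = 0) (hM : ∀ w, w ∈ M ↔ ∀ x ∈ M, B x w = 0)
    (hl0 : l ≠ 0) (hl : IsInvariantUnder ρ L l) (hm0 : m ≠ 0) (hm : IsInvariantUnder ρ M m)
    (hP : ∀ w φ, P (ρ w φ) = ρ (h w) (P φ))
    (hhL : ∀ w ∈ L, h w ∈ L) (hhM : ∀ w ∈ M, h w ∈ M)
    {a b : ℂ} (ha : ∀ φ, l (P φ) = a * l φ) (hb : ∀ φ, m (P φ) = b * m φ) :
    b * normalizedAbs (LinearMap.det (h.toLinearMap.restrict (p := M ⊓ L) (q := M ⊓ L)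
        fun w hw => ⟨hhM w hw.1, hhL w hw.2⟩)) =
      a * normalizedAbs (LinearMap.det (h.toLinearMap.restrict hhM)) := by
  obtain ⟨m', hm'0, hm', hm'P⟩ := hρ.exists_isInvariantUnder_apply_eq_mul hL
    (fun w hw w' hw' => (hM w').1 hw' w hw) hl0 hl hP hhL hhM ha
  obtain ⟨c, rfl⟩ := hρ.exists_eq_smul hM hm0 hm hm'
  obtain ⟨φ, hφ⟩ := DFunLike.ne_iff.1 hm'0
  have h1 := hm'P φ
  rw [LinearMap.smul_apply, hb, ← mul_smul_comm] at h1
  rw [mul_right_cancel₀ hφ h1, ← det_restrict_inf_mul_det_mapQ h hhL hhM, normalizedAbs_mul]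
  push_cast
  ring

end IsWeylSystem

end Ratio

section Eigenvalue

theorem det_restrict_congr {F W : Type*} [Field F] [AddCommGroup W] [Module F W]
    {L M : Submodule F W} (g : W →ₗ[F] W) (h : L = M) (hL : ∀ w ∈ L, g w ∈ L)
    (hM : ∀ w ∈ M, g w ∈ M) : LinearMap.det (g.restrict hL) = LinearMap.det (g.restrict hM) := by
  subst h
  rfl

theorem eq_of_mul_eq_mul_sq {x y d : ℝ} {a b : ℂ} (hx : 0 < x) (hy : 0 < y) (hd : 0 < d)
    (ha : a ≠ 0) (h1 : b * y * d = a * x * (y ^ 2 : ℝ)) (h2 : a * x * d = b * y * (x ^ 2 : ℝ)) :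
    a = b := by
  have hx' : (x : ℂ) ≠ 0 := Complex.ofReal_ne_zero.2 hx.ne'
  have hy' : (y : ℂ) ≠ 0 := Complex.ofReal_ne_zero.2 hy.ne'
  have hd' : (d : ℂ) ≠ 0 := Complex.ofReal_ne_zero.2 hd.ne'
  push_cast at h1 h2
  have hbd : b * d = a * (x * y) := mul_right_cancel₀ hy' (by linear_combination h1)
  have had : a * d = b * (x * y) := mul_right_cancel₀ hx' (by linear_combination h2)
  have hsq : d ^ 2 = (x * y) ^ 2 := by
    refine Complex.ofReal_injective (mul_left_cancel₀ ha ?_)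
    push_cast
    linear_combination (d : ℂ) * had + (x * y : ℂ) * hbd
  rw [← Complex.ofReal_mul, ← (pow_left_inj₀ hd.le (mul_pos hx hy).le two_ne_zero).1 hsq] at hbd
  exact (mul_right_cancel₀ hd' hbd).symm

variable {F W S : Type*} [Field F] [NeZero (2 : F)] [ValuativeRel F] [TopologicalSpace F]
  [IsNonarchimedeanLocalField F] [AddCommGroup W] [Module F W] [Module.Finite F W]
  [TopologicalSpace W] [IsModuleTopology F W] [AddCommGroup S] [Module ℂ S]
  {ψ : AddChar F Circle} {B : W →ₗ[F] W →ₗ[F] F} {ρ : W → Module.End ℂ S} {L M : Submodule F W}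

/-- The group `H` acts through the character `χ` on a nonzero `L`-invariant functional. -/
def IsEigencharacter {H : Type*} [Group H] (ρ : W → Module.End ℂ S) (L : Submodule F W)
    (τ : Representation ℂ H S) (χ : H →* ℂˣ) : Prop :=
  ∃ l : Module.Dual ℂ S, l ≠ 0 ∧ IsInvariantUnder ρ L l ∧ ∀ h φ, l (τ h φ) = χ h * l φ

namespace IsWeylSystem

section Eigencharacter

variable {H : Type*} [Group H] {τ : Representation ℂ H S}

theorem exists_isEigencharacter (hρ : IsWeylSystem ψ B ρ) (hB : B.SeparatingLeft)
    (hL : ∀ w, w ∈ L ↔ ∀ x ∈ L, B x w = 0)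
    (hτ : ∀ h, ∀ w ∈ L, ∃ w' ∈ L, ∀ φ, τ h (ρ w φ) = ρ w' (τ h φ)) :
    ∃ χ, IsEigencharacter ρ L τ χ := by
  obtain ⟨l, hl0, hl⟩ := hρ.exists_isInvariantUnder hB hL
  have hinv (h : H) : IsInvariantUnder ρ L (l ∘ₗ τ h) := fun w hw φ => by
    obtain ⟨w', hw', h'⟩ := hτ h w hw
    rw [LinearMap.comp_apply, h', hl w' hw', LinearMap.comp_apply]
  choose c hc using fun h => hρ.exists_eq_smul hL hl0 hl (hinv h)
  have hcl (h : H) (φ : S) : l (τ h φ) = c h * l φ := LinearMap.congr_fun (hc h) φ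
  obtain ⟨φ, hφ⟩ := DFunLike.ne_iff.1 hl0
  let χ : H →* ℂ :=
    { toFun := c
      map_one' := mul_right_cancel₀ hφ <| by
        rw [← hcl, _root_.map_one, Module.End.one_apply, one_mul]
      map_mul' := fun h h' => mul_right_cancel₀ hφ <| by
        rw [← hcl, _root_.map_mul, Module.End.mul_apply, hcl, hcl, mul_assoc] }
  exact ⟨χ.toHomUnits, l, hl0, hl, hcl⟩

theorem isEigencharacter_unique (hρ : IsWeylSystem ψ B ρ)
    (hL : ∀ w, w ∈ L ↔ ∀ x ∈ L, B x w = 0) {χ χ' : H →* ℂˣ} (hχ : IsEigencharacter ρ L τ χ)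
    (hχ' : IsEigencharacter ρ L τ χ') : χ = χ' := by
  obtain ⟨l, hl0, hl, hlχ⟩ := hχ
  obtain ⟨l', hl0', hl', hlχ'⟩ := hχ'
  obtain ⟨c, rfl⟩ := hρ.exists_eq_smul hL hl0 hl hl'
  obtain ⟨φ, hφ⟩ := DFunLike.ne_iff.1 hl0'
  ext h
  refine mul_right_cancel₀ hφ ?_
  rw [← hlχ', LinearMap.smul_apply, LinearMap.smul_apply, hlχ, smul_eq_mul, smul_eq_mul,
    mul_left_comm]

end Eigencharacter

theorem eigenvalue_eq {l m : Module.Dual ℂ S} {P : Module.End ℂ S} {h : W ≃ₗ[F] W}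
    (hρ : IsWeylSystem ψ B ρ)
    (hL : ∀ w, w ∈ L ↔ ∀ x ∈ L, B x w = 0) (hM : ∀ w, w ∈ M ↔ ∀ x ∈ M, B x w = 0)
    (hl0 : l ≠ 0) (hl : IsInvariantUnder ρ L l) (hm0 : m ≠ 0) (hm : IsInvariantUnder ρ M m)
    (hP : ∀ w φ, P (ρ w φ) = ρ (h w) (P φ))
    (hhL : ∀ w ∈ L, h w ∈ L) (hhM : ∀ w ∈ M, h w ∈ M) {x y : ℝ} (hx : 0 < x) (hy : 0 < y)
    (hdetL : normalizedAbs (LinearMap.det (h.toLinearMap.restrict hhL)) = x ^ 2)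
    (hdetM : normalizedAbs (LinearMap.det (h.toLinearMap.restrict hhM)) = y ^ 2)
    {a b : ℂ} (ha0 : a ≠ 0) (ha : ∀ φ, l (P φ) = a * x * l φ) (hb : ∀ φ, m (P φ) = b * y * m φ) :
    a = b := by
  have hLM := hρ.mul_normalizedAbs_det_restrict_inf hL hM hl0 hl hm0 hm hP hhL hhM ha hb
  have hML := hρ.mul_normalizedAbs_det_restrict_inf hM hL hm0 hm hl0 hl hP hhM hhL hb ha
  have hinf := det_restrict_congr h.toLinearMap (inf_comm L M)
    (fun w hw => ⟨hhL w hw.1, hhM w hw.2⟩) (fun w hw => ⟨hhM w hw.1, hhL w hw.2⟩)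
  rw [hdetM] at hLM
  rw [hinf, hdetL] at hML
  exact eq_of_mul_eq_mul_sq hx hy (normalizedAbs_pos (det_restrict_ne_zero h _)) ha0 hLM hML

end IsWeylSystem

end Eigenvalue

section Heisenberg

open Topology

theorem isLocallyConstant_of_mem_nhds_zero {A C : Type*} [AddGroup A] [TopologicalSpace A]
    [IsTopologicalAddGroup A] [CommMonoid C] (χ : AddChar A C) (h : {t | χ t = 1} ∈ 𝓝 0) :
    IsLocallyConstant χ := by
  rw [IsLocallyConstant.iff_eventually_eq]
  intro t
  have hsub : Filter.Tendsto (fun s => s - t) (𝓝 t) (𝓝 0) := by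
    simpa using (continuous_sub_right t).tendsto t
  filter_upwards [hsub h] with s hs
  rw [← sub_add_cancel s t, AddChar.map_add_eq_mul, show χ (s - t) = 1 from hs, one_mul]

variable {F W S : Type*} [Field F] [TopologicalSpace F] [AddCommGroup W] [Module F W]
  [AddCommGroup S] [Module ℂ S] {B : W →ₗ[F] W →ₗ[F] F}

/-- `π` is a smooth irreducible representation of the Heisenberg group with central
character `ψ`. -/
structure IsHeisenbergRepresentation (ψ : AddChar F Circle)
    (π : Representation ℂ (Heisenberg B) S) : Prop where
  smooth : ∀ φ : S, IsOpen {a | π a φ = φ}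
  irreducible : π.IsIrreducible
  central_char : ∀ (t : F) (φ : S), π ⟨0, t⟩ φ = (ψ t : ℂ) • φ

/-- The operators by which the vectors of `W` act in a representation of the Heisenberg group
of `W`. -/
def weylOp (π : Representation ℂ (Heisenberg B) S) (w : W) : Module.End ℂ S := π ⟨w, 0⟩

namespace IsHeisenbergRepresentation

variable {ψ : AddChar F Circle} {π : Representation ℂ (Heisenberg B) S}

theorem apply_eq_smul_weylOp (hπ : IsHeisenbergRepresentation ψ π) (a : Heisenberg B) (φ : S) :
    π a φ = (ψ a.scal : ℂ) • weylOp π a.vec φ := by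
  have ha : a = ⟨0, a.scal⟩ * ⟨a.vec, 0⟩ := by simp [Heisenberg.mul_def]
  conv_lhs => rw [ha]
  rw [map_mul, Module.End.mul_apply, hπ.central_char]
  rfl

theorem nontrivial (hπ : IsHeisenbergRepresentation ψ π) : Nontrivial S := by
  by_contra hS
  rw [not_nontrivial_iff_subsingleton] at hS
  obtain ⟨N, N', hN⟩ := hπ.irreducible.exists_pair_ne
  exact hN (SetLike.ext fun φ => iff_of_true (Subsingleton.elim 0 φ ▸ N.toSubmodule.zero_mem)
    (Subsingleton.elim 0 φ ▸ N'.toSubmodule.zero_mem))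

theorem eq_bot_or_eq_top (hπ : IsHeisenbergRepresentation ψ π) (N : Submodule ℂ S)
    (hN : ∀ w, ∀ φ ∈ N, weylOp π w φ ∈ N) : N = ⊥ ∨ N = ⊤ := by
  let N' : Subrepresentation π :=
    { toSubmodule := N
      apply_mem_toSubmodule := fun a φ hφ => by
        rw [hπ.apply_eq_smul_weylOp]
        exact N.smul_mem _ (hN _ _ hφ) }
  exact (hπ.irreducible.eq_bot_or_eq_top N').imp (congrArg Subrepresentation.toSubmodule)
    (congrArg Subrepresentation.toSubmodule)

theorem preimage_stabilizer_mem_nhds {T : Type*} [TopologicalSpace T]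
    (hπ : IsHeisenbergRepresentation ψ π) {f : T → Heisenberg B} (hf : Continuous f) {t : T}
    (ht : f t = 1) (φ : S) : {s | π (f s) φ = φ} ∈ 𝓝 t := by
  refine ((hπ.smooth φ).preimage hf).mem_nhds ?_
  change π (f t) φ = φ
  rw [ht, map_one, Module.End.one_apply]

theorem isLocallyConstant [IsTopologicalAddGroup F] (hπ : IsHeisenbergRepresentation ψ π) :
    IsLocallyConstant ψ := by
  have := hπ.nontrivial
  obtain ⟨φ, hφ⟩ := exists_ne (0 : S)
  let := moduleTopology F W
  have hf : Continuous fun t : F => (⟨0, t⟩ : Heisenberg B) :=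
    continuous_induced_rng.2 (continuous_const.prodMk continuous_id)
  refine isLocallyConstant_of_mem_nhds_zero ψ
    (Filter.mem_of_superset (hπ.preimage_stabilizer_mem_nhds hf Heisenberg.one_def.symm φ)
      fun t ht => ?_)
  have h : π ⟨0, t⟩ φ = φ := ht
  rw [hπ.central_char, ← sub_eq_zero, ← one_smul ℂ φ, smul_smul, mul_one, ← sub_smul] at h
  exact Circle.coe_eq_one.1 (sub_eq_zero.1 ((smul_eq_zero.1 h).resolve_right hφ))

theorem isWeylSystem [IsTopologicalAddGroup F] [TopologicalSpace W] [IsModuleTopology F W]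
    (hπ : IsHeisenbergRepresentation ψ π) (hψ : ψ ≠ 1) (hB : ∀ w w', B w w' = -B w' w) :
    IsWeylSystem ψ B (weylOp π) where
  ne_one := hψ
  isLocallyConstant := hπ.isLocallyConstant
  skew := hB
  nontrivial := hπ.nontrivial
  map_zero := map_one π
  map_mul w w' φ := by
    change π ⟨w, 0⟩ (π ⟨w', 0⟩ φ) = _
    rw [← Module.End.mul_apply, ← map_mul, hπ.apply_eq_smul_weylOp]
    simp [Heisenberg.mul_def]
  irreducible := hπ.eq_bot_or_eq_top
  smooth φ := by
    refine hπ.preimage_stabilizer_mem_nhds (f := fun w => ⟨w, 0⟩) ?_ rfl φ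
    rw [eq_moduleTopology F W]
    let := moduleTopology F W
    exact continuous_induced_rng.2 (continuous_id.prodMk continuous_const)

end IsHeisenbergRepresentation

end Heisenberg

section TensorCoordinates

variable {F D : Type*} [Field F] [DivisionRing D]
  {U : Type*} [AddCommGroup U] [Module F U] [Module Dᵐᵒᵖ U]
  {V : Type*} [AddCommGroup V] [Module F V] [Module D V]

theorem dtmul_op_smul (u : U) (a : D) (v : V) :
    dtmul F D (MulOpposite.op a • u) v = dtmul F D u (a • v) :=
  (Submodule.Quotient.eq _).2 (Submodule.subset_span ⟨u, a, v, rfl⟩)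

theorem DTensor.hom_ext {M : Type*} [AddCommGroup M] [Module F M]
    {f g : DTensor F D U V →ₗ[F] M} (h : ∀ u v, f (dtmul F D u v) = g (dtmul F D u v)) : f = g :=
  Submodule.linearMap_qext _ (TensorProduct.ext' h)

variable (F D U V) in
/-- The pure tensor `u ⊗ v` in `U ⊗_D V`, as a function of `u` and `v`. -/
def dtmulLin : U →ₗ[F] V →ₗ[F] DTensor F D U V :=
  (TensorProduct.mk F U V).compr₂ (balancing F D U V).mkQ

theorem dtmulLin_apply (u : U) (v : V) : dtmulLin F D U V u v = dtmul F D u v := rfl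

variable [Algebra F D] [IsScalarTower F Dᵐᵒᵖ U] [IsScalarTower F D V] {ι : Type*}
  (b : Module.Basis ι D V)

/-- The map `(u, v) ↦ (u vᵢ)ᵢ`, where the `vᵢ` are the coordinates of `v` in the basis `b`. -/
def coordLin : U →ₗ[F] V →ₗ[F] (ι → U) :=
  LinearMap.mk₂ F (fun u v i => MulOpposite.op (b.repr v i) • u)
    (fun _ _ _ => funext fun _ => smul_add _ _ _)
    (fun _ _ _ => funext fun _ => smul_comm _ _ _)
    (fun _ _ _ => funext fun _ => by simp [add_smul])
    (fun c u v => funext fun i => by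
      rw [← algebraMap_smul D c v, map_smul, Finsupp.smul_apply, smul_eq_mul,
        ← Algebra.smul_def, MulOpposite.op_smul, smul_assoc, Pi.smul_apply])

theorem coordLin_apply (u : U) (v : V) (i : ι) :
    coordLin (F := F) b u v i = MulOpposite.op (b.repr v i) • u := rfl

theorem balancing_le_ker_lift_coordLin :
    balancing F D U V ≤ LinearMap.ker (TensorProduct.lift (coordLin b)) := by
  rw [balancing, Submodule.span_le]
  rintro _ ⟨u, a, v, rfl⟩
  rw [SetLike.mem_coe, LinearMap.mem_ker, map_sub, sub_eq_zero]
  ext i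
  rw [TensorProduct.lift.tmul, TensorProduct.lift.tmul, coordLin_apply, coordLin_apply, map_smul,
    Finsupp.smul_apply, smul_eq_mul, MulOpposite.op_mul, mul_smul]

variable [Fintype ι]

/-- The isomorphism of `U ⊗_D V` with a power of `U` given by a basis of `V`. -/
def tensorCoord : DTensor F D U V ≃ₗ[F] (ι → U) :=
  LinearEquiv.ofLinearMap
    ((balancing F D U V).liftQ (TensorProduct.lift (coordLin b)) (balancing_le_ker_lift_coordLin b))
    (∑ i, (dtmulLin F D U V).flip (b i) ∘ₗ LinearMap.proj i)
    (by
      classical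
      refine LinearMap.pi_ext fun i u => ?_
      rw [LinearMap.comp_apply, LinearMap.sum_apply, Finset.sum_eq_single i]
      · ext j
        change MulOpposite.op (b.repr (b i) j) • (Pi.single i u : ι → U) i = _
        rw [Pi.single_eq_same, Module.Basis.repr_self, LinearMap.id_apply]
        rcases eq_or_ne i j with rfl | hij
        · simp
        · rw [Finsupp.single_eq_of_ne hij.symm, Pi.single_eq_of_ne hij.symm]
          simp
      · intro j _ hj
        rw [LinearMap.comp_apply, LinearMap.proj_apply, Pi.single_eq_of_ne hj, map_zero]
      · simp)
    (DTensor.hom_ext fun u v => by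
      rw [LinearMap.comp_apply, LinearMap.sum_apply, LinearMap.id_apply]
      change ∑ i, dtmul F D (MulOpposite.op (b.repr v i) • u) (b i) = _
      simp only [dtmul_op_smul]
      simp only [← dtmulLin_apply, ← map_sum, b.sum_repr])

theorem tensorCoord_symm_apply (x : ι → U) :
    (tensorCoord (F := F) b).symm x = ∑ i, dtmul F D (x i) (b i) := by
  change (∑ i, (dtmulLin F D U V).flip (b i) ∘ₗ LinearMap.proj i) x = _
  rw [LinearMap.sum_apply]
  rfl

theorem sum_tensorCoord (w : DTensor F D U V) :
    ∑ i, dtmul F D (tensorCoord b w i) (b i) = w := by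
  rw [← tensorCoord_symm_apply (F := F), LinearEquiv.symm_apply_apply]

theorem tensorCoord_tensorMap (g : U →ₗ[Dᵐᵒᵖ] U) (w : DTensor F D U V) (i : ι) :
    tensorCoord b (tensorMap F V g w) i = g (tensorCoord b w i) := by
  have h : LinearMap.proj i ∘ₗ (tensorCoord b).toLinearMap ∘ₗ tensorMap F V g =
      g.restrictScalars F ∘ₗ LinearMap.proj i ∘ₗ (tensorCoord b).toLinearMap :=
    DTensor.hom_ext fun u v => (g.map_smul (MulOpposite.op (b.repr v i)) u).symm
  exact LinearMap.congr_fun h w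

theorem mem_subTensor_iff (X : Submodule Dᵐᵒᵖ U) (w : DTensor F D U V) :
    w ∈ subTensor V X ↔ ∀ i, tensorCoord b w i ∈ X := by
  constructor
  · intro hw i
    induction hw using Submodule.span_induction with
    | mem w h =>
      obtain ⟨x, hx, v, rfl⟩ := h
      exact X.smul_mem _ hx
    | zero => rw [map_zero]; exact X.zero_mem
    | add x y _ _ hx hy => rw [map_add]; exact X.add_mem hx hy
    | smul c x _ hx =>
      rw [map_smul, Pi.smul_apply, ← algebraMap_smul Dᵐᵒᵖ c]
      exact X.smul_mem _ hx
  · intro h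
    rw [← sum_tensorCoord b w]
    exact Submodule.sum_mem _ fun i _ => Submodule.subset_span ⟨_, h i, _, rfl⟩

/-- The isomorphism of `X ⊗_D V` with a power of `X` given by a basis of `V`. -/
def subTensorCoord (X : Submodule Dᵐᵒᵖ U) : subTensor (F := F) V X ≃ₗ[F] (ι → X) where
  toFun w i := ⟨tensorCoord b w.1 i, (mem_subTensor_iff b X w.1).1 w.2 i⟩
  invFun x := ⟨(tensorCoord (F := F) b).symm fun i => x i, (mem_subTensor_iff b X _).2 fun i => by
    rw [LinearEquiv.apply_symm_apply]; exact (x i).2⟩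
  map_add' x y := by ext i; simp
  map_smul' c x := by ext i; simp
  left_inv w := by ext1; simp
  right_inv x := by ext i; simp

section Finite

variable [Module.Finite Dᵐᵒᵖ U] [Module.Finite D V] [Module.Finite F D]

theorem finite_mulOpposite (F D : Type*) [Field F] [DivisionRing D] [Algebra F D]
    [Module.Finite F D] : Module.Finite F Dᵐᵒᵖ :=
  Module.Finite.equiv (MulOpposite.opLinearEquiv F (M := D))

theorem det_restrict_tensorMap (X : Submodule Dᵐᵒᵖ U) (g : U →ₗ[Dᵐᵒᵖ] U) (hg : ∀ x ∈ X, g x ∈ X)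
    (hg' : ∀ w ∈ subTensor (F := F) V X, tensorMap F V g w ∈ subTensor (F := F) V X) :
    LinearMap.det ((tensorMap F V g).restrict hg')
      = LinearMap.det ((g.restrict hg).restrictScalars F) ^ Module.finrank D V := by
  have := finite_mulOpposite F D
  have : Module.Finite F X := Module.Finite.trans Dᵐᵒᵖ X
  let b := Module.finBasis D V
  have h := LinearMap.det_pi fun _ : Fin (Module.finrank D V) => (g.restrict hg).restrictScalars F
  rw [Finset.prod_const, Finset.card_univ, Fintype.card_fin] at h
  rw [← h, ← LinearMap.det_conj _ (subTensorCoord (F := F) b X)]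
  congr 1
  refine LinearMap.ext fun x => ?_
  obtain ⟨w, rfl⟩ := (subTensorCoord (F := F) b X).surjective x
  rw [LinearMap.comp_apply, LinearMap.comp_apply, LinearEquiv.coe_coe, LinearEquiv.coe_coe,
    LinearEquiv.symm_apply_apply]
  ext i
  exact tensorCoord_tensorMap b g w.1 i

variable (F) in
theorem finrank_pi_rightModule {n : ℕ} (Z : Type*) [AddCommGroup Z] [Module F Z] [Module Dᵐᵒᵖ Z]
    [IsScalarTower F Dᵐᵒᵖ Z] [Module.Finite Dᵐᵒᵖ Z] :
    Module.finrank F (Fin n → Z) = n * (Module.finrank F D * Module.finrank Dᵐᵒᵖ Z) := by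
  have := finite_mulOpposite F D
  have : Module.Finite F Z := Module.Finite.trans Dᵐᵒᵖ Z
  rw [Module.finrank_pi_fintype, Finset.sum_const, Finset.card_univ, Fintype.card_fin, smul_eq_mul,
    (MulOpposite.opLinearEquiv F (M := D)).finrank_eq, Module.finrank_mul_finrank]

theorem finrank_subTensor (X : Submodule Dᵐᵒᵖ U) :
    Module.finrank F (subTensor (F := F) V X)
      = Module.finrank D V * (Module.finrank F D * Module.finrank Dᵐᵒᵖ X) := by
  rw [(subTensorCoord (F := F) (Module.finBasis D V) X).finrank_eq,
    finrank_pi_rightModule F (D := D)]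

theorem finrank_dTensor :
    Module.finrank F (DTensor F D U V)
      = Module.finrank D V * (Module.finrank F D * Module.finrank Dᵐᵒᵖ U) := by
  rw [(tensorCoord (Module.finBasis D V)).finrank_eq, finrank_pi_rightModule F (D := D)]

variable (F D U V) in
theorem finite_dTensor : Module.Finite F (DTensor F D U V) := by
  have := finite_mulOpposite F D
  have : Module.Finite F U := Module.Finite.trans Dᵐᵒᵖ U
  exact Module.Finite.equiv (tensorCoord (F := F) (U := U) (Module.finBasis D V)).symm

end Finite

end TensorCoordinates

section TensorForm

theorem orthogonal_eq_self_of_two_mul_finrank_eq {F W : Type*} [Field F] [AddCommGroup W]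
    [Module F W] [Module.Finite F W] {B : LinearMap.BilinForm F W} (hB : B.Nondegenerate)
    {L : Submodule F W} (hL : ∀ x ∈ L, ∀ y ∈ L, B x y = 0)
    (hdim : Module.finrank F W = 2 * Module.finrank F L) : B.orthogonal L = L := by
  symm
  refine Submodule.eq_of_le_of_finrank_eq (fun y hy x hx => hL x hx y hy) ?_
  rw [LinearMap.BilinForm.finrank_orthogonal hB, hdim]
  omega

section Dual

variable {F D : Type*} [Field F] [DivisionRing D] [Algebra F D] [StarRing D] {ε : ℤˣ}
  {V : Type*} [AddCommGroup V] [Module F V] [Module D V]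

/-- The map `v ↦ ⟨·, v⟩` from a left Hermitian space to its dual, which is a right `D`-space and
is only considered as an `F`-space here. -/
def LeftHermitianForm.toDual (hV : LeftHermitianForm F D ε V) : V →ₗ[F] (V →ₗ[D] D) where
  toFun v' :=
    { toFun := fun v => hV.form v v'
      map_add' := fun v w => by rw [map_add, LinearMap.add_apply]
      map_smul' := fun a v => hV.smul_form v v' a }
  map_add' v w := by ext; simp
  map_smul' c v := by ext; simp

theorem LeftHermitianForm.toDual_injective (hV : LeftHermitianForm F D ε V) :
    Function.Injective hV.toDual := by
  rw [← LinearMap.ker_eq_bot, LinearMap.ker_eq_bot']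
  intro v hv
  refine hV.nondegenerate v fun v' => ?_
  rw [hV.form_symm, show hV.form v' v = 0 from LinearMap.congr_fun hv v', star_zero, smul_zero]

theorem LeftHermitianForm.toDual_surjective [IsScalarTower F D V] [Module.Finite F D]
    [Module.Finite D V] (hV : LeftHermitianForm F D ε V) : Function.Surjective hV.toDual := by
  have : Module.Finite F V := Module.Finite.trans D V
  let e := (Module.finBasis D V).constr F (M' := D)
  have : Module.Finite F (V →ₗ[D] D) := Module.Finite.equiv e
  refine (LinearMap.injective_iff_surjective_of_finrank_eq_finrank ?_).1 hV.toDual_injective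
  rw [← e.finrank_eq, Module.finrank_pi_fintype, Finset.sum_const, Finset.card_univ,
    Fintype.card_fin, smul_eq_mul, mul_comm, Module.finrank_mul_finrank]

end Dual

variable {F D : Type*} [Field F] [DivisionRing D] [Algebra F D] [StarRing D] [IsTypeI F D]

instance IsTypeI.finite : Module.Finite F D := by
  apply Module.finite_of_finrank_pos
  rcases IsTypeI.cases (F := F) (D := D) with h | h | h <;> omega

theorem halfTrace_star (x : D) : halfTrace F D (star x) = halfTrace F D x := by
  apply (algebraMap F D).injective
  rw [algebraMap_halfTrace, algebraMap_halfTrace, star_star, add_comm]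

theorem eq_zero_of_halfTrace_mul_eq_zero [NeZero (2 : F)] {x : D}
    (h : ∀ a, halfTrace F D (a * x) = 0) : x = 0 := by
  by_contra hx
  have h1 := congrArg (algebraMap F D) (h x⁻¹)
  rw [inv_mul_cancel₀ hx, algebraMap_halfTrace, star_one, map_zero, one_add_one_eq_two,
    ← map_ofNat (algebraMap F D) 2, ← map_mul, inv_mul_cancel₀ two_ne_zero, map_one] at h1
  exact one_ne_zero h1

variable [CharZero F] {ε ε' : ℤˣ}
  {U : Type*} [AddCommGroup U] [Module F U] [Module Dᵐᵒᵖ U] [IsScalarTower F Dᵐᵒᵖ U]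
  {V : Type*} [AddCommGroup V] [Module F V] [Module D V] [IsScalarTower F D V]

theorem tensorForm_dtmul_eq_halfTrace (hU : RightHermitianForm F D ε U)
    (hV : LeftHermitianForm F D ε' V) (u u' : U) (v v' : V) :
    tensorForm hU hV (dtmul F D u v) (dtmul F D u' v')
      = halfTrace F D (hU.form u u' * star (hV.form v v')) := rfl

theorem tensorForm_skew (hU : RightHermitianForm F D ε U) (hV : LeftHermitianForm F D (-ε) V)
    (w w' : DTensor F D U V) : tensorForm hU hV w w' = -tensorForm hU hV w' w := by
  induction w using DTensor.induction with
  | h0 => simp only [map_zero, LinearMap.zero_apply, neg_zero]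
  | h2 x y hx hy => simp only [map_add, LinearMap.add_apply, hx, hy, neg_add]
  | h1 u v =>
    induction w' using DTensor.induction with
    | h0 => simp only [map_zero, LinearMap.zero_apply, neg_zero]
    | h2 x y hx hy => simp only [map_add, LinearMap.add_apply, hx, hy, neg_add]
    | h1 u' v' =>
      rw [tensorForm_dtmul_eq_halfTrace, tensorForm_dtmul_eq_halfTrace, hU.form_symm u' u,
        hV.form_symm v' v, ← map_neg, star_units_smul, star_star, ← halfTrace_star (F := F),
        star_mul, star_star, halfTrace_mul_comm]
      congr 1
      rcases Int.units_eq_one_or ε with rfl | rfl <;> simp [Units.smul_def]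

theorem tensorForm_separatingLeft [Module.Finite D V] (hU : RightHermitianForm F D ε U)
    (hV : LeftHermitianForm F D ε' V) : (tensorForm hU hV).SeparatingLeft := by
  intro w hw
  let b := Module.finBasis D V
  suffices h : ∀ j, tensorCoord (F := F) b w j = 0 from
    (tensorCoord (F := F) b).map_eq_zero_iff.1 (funext h)
  intro j
  refine hU.nondegenerate _ fun u' => eq_zero_of_halfTrace_mul_eq_zero (F := F) fun a => ?_
  obtain ⟨v', hv'⟩ := hV.toDual_surjective (b.coord j)
  have hbv' (i) : hV.form (b i) v' = if i = j then 1 else 0 := by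
    rw [show hV.form (b i) v' = b.coord j (b i) from LinearMap.congr_fun hv' (b i),
      b.coord_apply, b.repr_self, Finsupp.single_apply]
  have h1 := hw (dtmul F D (MulOpposite.op a • u') v')
  rw [← sum_tensorCoord b w, map_sum, LinearMap.sum_apply, Finset.sum_eq_single j] at h1
  · rwa [tensorForm_dtmul_eq_halfTrace, hbv', if_pos rfl, star_one, mul_one, hU.form_smul,
      halfTrace_mul_comm] at h1
  · intro i _ hi
    rw [tensorForm_dtmul_eq_halfTrace, hbv', if_neg hi, star_zero, mul_zero, map_zero]
  · simp

theorem tensorForm_nondegenerate [Module.Finite D V] (hU : RightHermitianForm F D ε U)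
    (hV : LeftHermitianForm F D (-ε) V) : (tensorForm hU hV).Nondegenerate := by
  refine (LinearMap.IsRefl.nondegenerate_iff_separatingLeft fun w w' h => ?_).2
    (tensorForm_separatingLeft hU hV)
  rw [tensorForm_skew, h, neg_zero]

theorem tensorForm_eq_zero_of_isTotallyIsotropic (hU : RightHermitianForm F D ε U)
    (hV : LeftHermitianForm F D ε' V) {X : Submodule Dᵐᵒᵖ U} (hX : IsTotallyIsotropic hU X)
    {w w' : DTensor F D U V} (hw : w ∈ subTensor V X) (hw' : w' ∈ subTensor V X) :
    tensorForm hU hV w w' = 0 := by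
  refine Submodule.span_induction₂ (p := fun w w' _ _ => tensorForm hU hV w w' = 0) ?_ ?_ ?_ ?_ ?_
    ?_ ?_ hw hw'
  · rintro _ _ ⟨x, hx, v, rfl⟩ ⟨x', hx', v', rfl⟩
    rw [tensorForm_dtmul_eq_halfTrace, hX x hx x' hx', zero_mul, map_zero]
  all_goals intros; simp_all

theorem IsLagrangian.mem_subTensor_iff [Module.Finite Dᵐᵒᵖ U] [Module.Finite D V]
    {hU : RightHermitianForm F D ε U} {X : Submodule Dᵐᵒᵖ U} (hX : IsLagrangian hU X)
    (hV : LeftHermitianForm F D (-ε) V) (w : DTensor F D U V) :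
    w ∈ subTensor V X ↔ ∀ x ∈ subTensor V X, tensorForm hU hV x w = 0 := by
  have := finite_dTensor F D U V
  have h := orthogonal_eq_self_of_two_mul_finrank_eq (tensorForm_nondegenerate hU hV)
    (L := subTensor V X)
      (fun _ hx _ hy => tensorForm_eq_zero_of_isTotallyIsotropic hU hV hX.1 hx hy)
    (by rw [finrank_dTensor, finrank_subTensor, hX.2]; ring)
  rw [← LinearMap.BilinForm.mem_orthogonal_iff, h]

end TensorForm

section SiegelAbs

theorem isScalarTower_of_mulOpposite (F E : Type*) {D U : Type*} [Field F] [Field E] [Ring D]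
    [Algebra F D] [Algebra F E] [Algebra E D] [IsScalarTower F E D] [AddCommGroup U] [Module F U]
    [Module E U] [Module Dᵐᵒᵖ U] [IsScalarTower F Dᵐᵒᵖ U] [IsScalarTower E Dᵐᵒᵖ U] :
    IsScalarTower F E U where
  smul_assoc c e u := by
    have h : (c • e) • (1 : Dᵐᵒᵖ) = c • e • (1 : Dᵐᵒᵖ) :=
      congrArg MulOpposite.op (smul_assoc c e (1 : D))
    rw [← one_smul Dᵐᵒᵖ u, ← smul_assoc (c • e), h, smul_assoc, smul_assoc]

variable {F : Type*} [Field F] [CharZero F] [ValuativeRel F] [TopologicalSpace F]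
  [IsNonarchimedeanLocalField F] {D : Type*} [DivisionRing D] [Algebra F D] [StarRing D]
  [Module.Finite F D] {E : Type*} [Field E] [Algebra F E] [Algebra E D] [IsScalarTower F E D]
  [Algebra.IsCentral E D] [TopologicalSpace E] [IsModuleTopology F E]
  [IsTopologicalRing E] [LocallyCompactSpace E]
  {ε : ℤˣ} {U : Type*} [AddCommGroup U] [Module F U] [Module E U] [Module Dᵐᵒᵖ U]
  [IsScalarTower F Dᵐᵒᵖ U] [IsScalarTower E Dᵐᵒᵖ U] [Module.Finite Dᵐᵒᵖ U]
  (hU : RightHermitianForm F D ε U) (X : Submodule Dᵐᵒᵖ U)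

theorem siegelAbs_eq_normalizedAbs_det (g : siegelParabolic hU X) :
    siegelAbs E hU X g =
      normalizedAbs (LinearMap.det ((restrictTo hU X g).restrictScalars F)) := by
  have : Module.Finite F E := Module.Finite.of_injective
    (IsScalarTower.toAlgHom F E D).toLinearMap (algebraMap E D).injective
  have : Module.Finite E D := Module.Finite.of_restrictScalars_finite F E D
  have := finite_mulOpposite E D
  have : CharZero E := charZero_of_injective_algebraMap (algebraMap F E).injective
  have : IsScalarTower F E U := isScalarTower_of_mulOpposite F E (D := D)
  have : IsScalarTower F E X := ⟨fun c e x => Subtype.ext (smul_assoc c e (x : U))⟩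
  have : Module.Finite E X := Module.Finite.trans Dᵐᵒᵖ X
  rw [siegelAbs, csaDegree, (MulOpposite.opLinearEquiv E (M := D)).finrank_eq, ← csaDegree,
    ← normalizedAbs_pow, reducedNorm_end_pow_csaDegree, ← normalizedAbs_algebraNorm (F := F),
    ← LinearMap.det_restrictScalars]
  rfl

theorem siegelAbs_pos (g : siegelParabolic hU X) : 0 < siegelAbs E hU X g := by
  have := finite_mulOpposite F D
  have : Module.Finite F U := Module.Finite.trans Dᵐᵒᵖ U
  rw [siegelAbs_eq_normalizedAbs_det (F := F)]
  exact normalizedAbs_pos (det_restrict_ne_zero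
    (((g : isometryGroup hU) : U ≃ₗ[Dᵐᵒᵖ] U).restrictScalars F) (L := X.restrictScalars F)
    fun x hx => (g.2 x).2 hx)

theorem siegelAbs_mul (g g' : siegelParabolic hU X) :
    siegelAbs E hU X (g * g') = siegelAbs E hU X g * siegelAbs E hU X g' := by
  rw [siegelAbs_eq_normalizedAbs_det (F := F), siegelAbs_eq_normalizedAbs_det (F := F),
    siegelAbs_eq_normalizedAbs_det (F := F), ← normalizedAbs_mul, ← map_mul]
  rfl

theorem siegelAbs_one : siegelAbs E hU X 1 = 1 := by
  rw [siegelAbs_eq_normalizedAbs_det (F := F), ← normalizedAbs_one (E := F)]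
  congr 1
  exact LinearMap.det_id

end SiegelAbs

section Jacobi

variable {F D : Type*} [Field F] [DivisionRing D] [Algebra F D] [StarRing D] {ε ε' : ℤˣ}
  {U : Type*} [AddCommGroup U] [Module F U] [Module Dᵐᵒᵖ U] [IsScalarTower F Dᵐᵒᵖ U]
  {hU : RightHermitianForm F D ε U}
  {V : Type*} [AddCommGroup V] [Module F V] [Module D V]

variable (F V) in
/-- The action of an element of `G(U)` on `U ⊗_D V`. -/
def tensorEquiv (g : isometryGroup hU) : DTensor F D U V ≃ₗ[F] DTensor F D U V :=
  LinearEquiv.ofLinearMap (tensorMap F V (g : U ≃ₗ[Dᵐᵒᵖ] U).toLinearMap)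
    (tensorMap F V (g : U ≃ₗ[Dᵐᵒᵖ] U).symm.toLinearMap)
    (DTensor.hom_ext fun u v => congrArg (dtmul F D · v) (LinearEquiv.apply_symm_apply _ u))
    (DTensor.hom_ext fun u v => congrArg (dtmul F D · v) (LinearEquiv.symm_apply_apply _ u))

theorem tensorEquiv_mem_subTensor {X : Submodule Dᵐᵒᵖ U} {g : isometryGroup hU}
    (hg : g ∈ siegelParabolic hU X) :
    ∀ w ∈ subTensor (F := F) V X, tensorEquiv F V g w ∈ subTensor (F := F) V X := by
  refine (Submodule.span_le (p := (subTensor V X).comap (tensorEquiv F V g).toLinearMap)).2 ?_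
  rintro _ ⟨x, hx, v, rfl⟩
  exact Submodule.subset_span ⟨_, (hg x).2 hx, v, rfl⟩

variable [CharZero F] [IsTypeI F D] [IsScalarTower F D V] {hV : LeftHermitianForm F D ε' V}
  {Gb : Type*} [Group Gb] {p : Gb →* isometryGroup hU} {S : Type*} [AddCommGroup S] [Module ℂ S]

/-- The restriction of a representation of the Jacobi group to the Heisenberg group. -/
abbrev heisenbergPart (ω : Representation ℂ (Jacobi hU hV p) S) :
    Representation ℂ (Heisenberg (tensorForm hU hV)) S :=
  ω.comp SemidirectProduct.inl

theorem inr_weylOp (ω : Representation ℂ (Jacobi hU hV p) S) (h : Gb) (w : DTensor F D U V)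
    (φ : S) : ω (SemidirectProduct.inr h) (weylOp (heisenbergPart ω) w φ) =
      weylOp (heisenbergPart ω) (tensorEquiv F V (p h) w) (ω (SemidirectProduct.inr h) φ) := by
  have hinl := SemidirectProduct.inl_aut (φ := (isometryAct hU hV).comp p) h ⟨w, 0⟩
  rw [map_inv, eq_mul_inv_iff_mul_eq] at hinl
  have hω := congrArg ω hinl
  rw [map_mul, map_mul] at hω
  exact (LinearMap.congr_fun hω φ).symm

theorem IsEnhancedOscillator.isHeisenbergRepresentation [TopologicalSpace F]
    [TopologicalSpace Gb] {ψ : AddChar F Circle} {hV : LeftHermitianForm F D (-ε) V}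
    {ω : Representation ℂ (Jacobi hU hV p) S} (hω : IsEnhancedOscillator ψ hU hV p ω) :
    IsHeisenbergRepresentation ψ (heisenbergPart ω) where
  smooth φ := (hω.smooth φ).preimage (continuous_id.prodMk continuous_const)
  irreducible := hω.irreducible
  central_char := hω.central_char

end Jacobi

section KudlaCharacter

variable {F : Type*} [Field F] [CharZero F] [ValuativeRel F] [TopologicalSpace F]
  [IsNonarchimedeanLocalField F] {D : Type*} [DivisionRing D] [Algebra F D] [StarRing D]
  {E : Type*} [Field E] [Algebra F E] [Algebra E D] [IsScalarTower F E D]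
  [Algebra.IsCentral E D] [TopologicalSpace E] [IsModuleTopology F E]
  [IsTopologicalRing E] [LocallyCompactSpace E]
  {ε : ℤˣ} {U : Type*} [AddCommGroup U] [Module F U] [Module E U] [Module Dᵐᵒᵖ U]
  [IsScalarTower F Dᵐᵒᵖ U] [IsScalarTower E Dᵐᵒᵖ U] [Module.Finite Dᵐᵒᵖ U]
  {hU : RightHermitianForm F D ε U} {Gb : Type*} [Group Gb] {p : Gb →* isometryGroup hU}
  {V : Type*} [AddCommGroup V] [Module D V]

section SiegelFactor

variable [Module.Finite F D]

variable (E p V) in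
/-- The character `h ↦ |h|_X ^ (dim V / 2)` of `P̄(X)`, with values in `ℝ`. -/
def siegelFactor (X : Submodule Dᵐᵒᵖ U) : siegelCover p X →* ℝ where
  toFun h := siegelAbs E hU X ⟨p h, h.2⟩ ^ ((Module.finrank D V : ℝ) / 2)
  map_one' := by
    rw [show (⟨p (1 : siegelCover p X), (1 : siegelCover p X).2⟩ : siegelParabolic hU X) = 1 from
      Subtype.ext (map_one p), siegelAbs_one, Real.one_rpow]
  map_mul' h h' := by
    rw [show (⟨p (h * h' : siegelCover p X), (h * h').2⟩ : siegelParabolic hU X) =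
      ⟨p h, h.2⟩ * ⟨p h', h'.2⟩ from Subtype.ext (map_mul p _ _), siegelAbs_mul,
      Real.mul_rpow (siegelAbs_pos hU X _).le (siegelAbs_pos hU X _).le]

theorem siegelFactor_pos (X : Submodule Dᵐᵒᵖ U) (h : siegelCover p X) :
    0 < siegelFactor E p V X h :=
  Real.rpow_pos_of_pos (siegelAbs_pos hU X _) _

theorem siegelFactor_sq (X : Submodule Dᵐᵒᵖ U) (h : siegelCover p X) :
    siegelFactor E p V X h ^ 2 = siegelAbs E hU X ⟨p h, h.2⟩ ^ Module.finrank D V := by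
  change (siegelAbs E hU X ⟨p h, h.2⟩ ^ ((Module.finrank D V : ℝ) / 2)) ^ 2 = _
  rw [← Real.rpow_mul_natCast (siegelAbs_pos hU X _).le, Nat.cast_two,
    div_mul_cancel₀ _ two_ne_zero, Real.rpow_natCast]

end SiegelFactor

variable [IsTypeI F D] [Module F V] [IsScalarTower F D V]

section Eigencharacter

variable {ε' : ℤˣ} {hV : LeftHermitianForm F D ε' V} {S : Type*} [AddCommGroup S] [Module ℂ S]
  {ω : Representation ℂ (Jacobi hU hV p) S} {X : Submodule Dᵐᵒᵖ U}

theorem isKudlaCharacter_iff {κ : siegelCover p X →* ℂˣ} :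
    IsKudlaCharacter E ω X κ ↔
      IsEigencharacter (weylOp (heisenbergPart ω)) (subTensor (F := F) V X)
        ((ω.comp SemidirectProduct.inr).comp (siegelCover p X).subtype)
        (κ * ((Complex.ofRealHom : ℝ →* ℂ).comp (siegelFactor E p V X)).toHomUnits) :=
  exists_congr fun _ => and_assoc

end Eigencharacter

variable [Module.Finite D V]

theorem normalizedAbs_det_tensorEquiv (X : Submodule Dᵐᵒᵖ U) (h : siegelCover p X) :
    normalizedAbs (LinearMap.det ((tensorEquiv F V (p h)).toLinearMap.restrict
      (tensorEquiv_mem_subTensor (V := V) h.2))) = siegelFactor E p V X h ^ 2 := by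
  rw [siegelFactor_sq, siegelAbs_eq_normalizedAbs_det (F := F), ← normalizedAbs_pow]
  exact congrArg normalizedAbs (det_restrict_tensorMap X _ (fun x hx => (h.2 x).2 hx) _)

variable {ψ : AddChar F Circle} {hV : LeftHermitianForm F D (-ε) V} {S : Type*} [AddCommGroup S]
  [Module ℂ S] {ω : Representation ℂ (Jacobi hU hV p) S} {X Y : Submodule Dᵐᵒᵖ U}

namespace IsHeisenbergRepresentation

theorem existsUnique_isKudlaCharacter (hω : IsHeisenbergRepresentation ψ (heisenbergPart ω))
    (hψ : ψ ≠ 1) (hX : IsLagrangian hU X) : ∃! κ, IsKudlaCharacter E ω X κ := by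
  let := moduleTopology F (DTensor F D U V)
  have : IsModuleTopology F (DTensor F D U V) := ⟨rfl⟩
  have := finite_dTensor F D U V
  have hρ := hω.isWeylSystem hψ (tensorForm_skew hU hV)
  simp only [isKudlaCharacter_iff]
  refine ((Equiv.mulRight (G := siegelCover p X →* ℂˣ) _).existsUnique_congr fun _ => Iff.rfl).2 ?_
  obtain ⟨χ, hχ⟩ := hρ.exists_isEigencharacter (tensorForm_separatingLeft hU hV)
    (hX.mem_subTensor_iff hV)
    (τ := (ω.comp SemidirectProduct.inr).comp (siegelCover p X).subtype)
    fun h w hw => ⟨_, tensorEquiv_mem_subTensor h.2 w hw, inr_weylOp ω h w⟩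
  exact ⟨χ, hχ, fun χ' hχ' => hρ.isEigencharacter_unique (hX.mem_subTensor_iff hV) hχ' hχ⟩

theorem kudlaCharacter_eq (hω : IsHeisenbergRepresentation ψ (heisenbergPart ω)) (hψ : ψ ≠ 1)
    (hX : IsLagrangian hU X) (hY : IsLagrangian hU Y) {κX : siegelCover p X →* ℂˣ}
    {κY : siegelCover p Y →* ℂˣ} (hκX : IsKudlaCharacter E ω X κX)
    (hκY : IsKudlaCharacter E ω Y κY) {h : Gb} (hhX : h ∈ siegelCover p X)
    (hhY : h ∈ siegelCover p Y) : κX ⟨h, hhX⟩ = κY ⟨h, hhY⟩ := by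
  let := moduleTopology F (DTensor F D U V)
  have : IsModuleTopology F (DTensor F D U V) := ⟨rfl⟩
  have := finite_dTensor F D U V
  obtain ⟨l, ⟨hl0, hl⟩, hlκ⟩ := hκX
  obtain ⟨m, ⟨hm0, hm⟩, hmκ⟩ := hκY
  exact Units.ext <| (hω.isWeylSystem hψ (tensorForm_skew hU hV)).eigenvalue_eq
    (hX.mem_subTensor_iff hV) (hY.mem_subTensor_iff hV) hl0 hl hm0 hm (inr_weylOp ω h)
    (tensorEquiv_mem_subTensor hhX) (tensorEquiv_mem_subTensor hhY)
    (siegelFactor_pos X ⟨h, hhX⟩) (siegelFactor_pos Y ⟨h, hhY⟩)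
    (normalizedAbs_det_tensorEquiv (E := E) X ⟨h, hhX⟩)
    (normalizedAbs_det_tensorEquiv (E := E) Y ⟨h, hhY⟩)
    (κX ⟨h, hhX⟩).ne_zero (hlκ ⟨h, hhX⟩) (hmκ ⟨h, hhY⟩)

end IsHeisenbergRepresentation

end KudlaCharacter

end Kudla

end

theorem kudla_characters_agree_on_intersection_general
    {F : Type*} [Field F] [CharZero F] [ValuativeRel F] [TopologicalSpace F]
    [IsNonarchimedeanLocalField F]
    {D : Type*} [DivisionRing D] [Algebra F D] [StarRing D] [Kudla.IsTypeI F D]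
    {E : Type*} [Field E] [Algebra F E] [Algebra E D] [IsScalarTower F E D]
    [Algebra.IsCentral E D] [TopologicalSpace E] [IsModuleTopology F E]
    [IsTopologicalRing E] [LocallyCompactSpace E] {ψ : AddChar F Circle} (hψ : ψ ≠ 1)
    {ε : ℤˣ} {U : Type*} [AddCommGroup U] [Module F U] [Module E U] [Module Dᵐᵒᵖ U]
    [IsScalarTower F Dᵐᵒᵖ U] [IsScalarTower E Dᵐᵒᵖ U] [Module.Finite Dᵐᵒᵖ U]
    (hU : Kudla.RightHermitianForm F D ε U) {Gb : Type*} [Group Gb]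
    (p : Gb →* Kudla.isometryGroup hU)
    {V : Type*} [AddCommGroup V] [Module F V] [Module D V] [IsScalarTower F D V]
    [Module.Finite D V] (hV : Kudla.LeftHermitianForm F D (-ε) V)
    {S : Type*} [AddCommGroup S] [Module ℂ S] (ω : Representation ℂ (Kudla.Jacobi hU hV p) S)
    (hω : Kudla.IsHeisenbergRepresentation ψ (Kudla.heisenbergPart ω)) (X Y : Submodule Dᵐᵒᵖ U)
    (hX : Kudla.IsLagrangian hU X) (hY : Kudla.IsLagrangian hU Y) :
    (∃! κ, Kudla.IsKudlaCharacter E ω X κ) ∧ (∃! κ, Kudla.IsKudlaCharacter E ω Y κ) ∧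
    ∀ (κX : Kudla.siegelCover p X →* ℂˣ) (κY : Kudla.siegelCover p Y →* ℂˣ),
      Kudla.IsKudlaCharacter E ω X κX → Kudla.IsKudlaCharacter E ω Y κY →
      ∀ (h : Gb) (hhX : h ∈ Kudla.siegelCover p X) (hhY : h ∈ Kudla.siegelCover p Y),
        κX ⟨h, hhX⟩ = κY ⟨h, hhY⟩ :=
  ⟨hω.existsUnique_isKudlaCharacter hψ hX, hω.existsUnique_isKudlaCharacter hψ hY,
    fun _ _ hκX hκY _ hhX hhY => hω.kudlaCharacter_eq hψ hX hY hκX hκY hhX hhY⟩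

theorem kudla_characters_agree_on_intersection
    -- `F` is a non-archimedean local field of characteristic zero
    {F : Type*} [Field F] [CharZero F] [ValuativeRel F] [TopologicalSpace F]
    [IsNonarchimedeanLocalField F]
    -- `D` with its involution `ι = star`
    {D : Type*} [DivisionRing D] [Algebra F D] [StarRing D] [Kudla.IsTypeI F D]
    -- `E` is the center of `D`, with its topology as a finite extension of `F`
    {E : Type*} [Field E] [Algebra F E] [Algebra E D] [IsScalarTower F E D]
    [Algebra.IsCentral E D] [TopologicalSpace E] [IsModuleTopology F E]
    [IsTopologicalRing E] [LocallyCompactSpace E]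
    -- `ψ` is a nontrivial unitary character of `F`
    {ψ : AddChar F Circle} (hψ_cont : Continuous ψ) (hψ : ψ ≠ 1)
    -- `U` is a split `ε`-Hermitian right `D`-space
    {ε : ℤˣ} {U : Type*} [AddCommGroup U] [Module F U] [Module E U] [Module Dᵐᵒᵖ U]
    [IsScalarTower F Dᵐᵒᵖ U] [IsScalarTower E Dᵐᵒᵖ U] [Module.Finite Dᵐᵒᵖ U]
    (hU : Kudla.RightHermitianForm F D ε U) (hsplit : Kudla.IsSplit hU)
    -- `p : Gb → G(U)` is the cover `Ḡ(U) → G(U)`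
    {Gb : Type*} [Group Gb] [TopologicalSpace Gb] [IsTopologicalGroup Gb]
    (p : Gb →* Kudla.isometryGroup hU) (hp : Kudla.IsModifiedCover hU p)
    -- `σ = (V, ω)` is an enhanced oscillator representation of `Ḡ(U)`
    {V : Type*} [AddCommGroup V] [Module F V] [Module D V] [IsScalarTower F D V]
    [Module.Finite D V] (hV : Kudla.LeftHermitianForm F D (-ε) V)
    {S : Type*} [AddCommGroup S] [Module ℂ S]
    (ω : Representation ℂ (Kudla.Jacobi hU hV p) S)
    (hω : Kudla.IsEnhancedOscillator ψ hU hV p ω)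
    -- `X` and `Y` are Lagrangian subspaces of `U`
    (X Y : Submodule Dᵐᵒᵖ U)
    (hX : Kudla.IsLagrangian hU X) (hY : Kudla.IsLagrangian hU Y) :
    -- `κ_{σ,X}` and `κ_{σ,Y}` are well defined, and they agree on the intersection
    (∃! κ, Kudla.IsKudlaCharacter E ω X κ) ∧ (∃! κ, Kudla.IsKudlaCharacter E ω Y κ) ∧
    ∀ (κX : Kudla.siegelCover p X →* ℂˣ) (κY : Kudla.siegelCover p Y →* ℂˣ),
      Kudla.IsKudlaCharacter E ω X κX → Kudla.IsKudlaCharacter E ω Y κY →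
      ∀ (h : Gb) (hhX : h ∈ Kudla.siegelCover p X) (hhY : h ∈ Kudla.siegelCover p Y),
        κX ⟨h, hhX⟩ = κY ⟨h, hhY⟩ :=
  kudla_characters_agree_on_intersection_general hψ hU p hV ω hω.isHeisenbergRepresentation
    X Y hX hY
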